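/- Let (R, m) be a catenary Noetherian local ring of dimension t. There exists a positive integer ℓ, depending only on R, with the following property: whenever x = x_1, ..., x_t is a sequence of elements with (x_1, ..., x_t) ⊆ m^ℓ whose image in R/U_R(0) is a system of parameters of R/U_R(0), and y = y_1, ..., y_t is a sequence of elements with (y) ⊆^A (x) for some t×t matrix A over R, then the image of y is a system of parameters of R/U_R(0) if and only if the determinantal map det(A): R/(x)^lim → R/(y)^lim is injective. -/

import Mathlib

/-!
Write `S = R / U`.  Since `U` has dimension `< t`, every sequence of length `t` satisfies a monomial
relation on `U`, so limit closures of sequences of length `t` can be computed in `S`.  Every minimal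
prime of `U` has dimension `t` by maximality of `U`, and catenarity then puts every nonmaximal prime
of `S` below the last but one term of a chain of primes of length `t`.

The module `S / (x)^lim` embeds into the top local cohomology `H_x = colim S / (x₁ⁿ, …, x_tⁿ)`, and
the determinantal map is the restriction of a natural map `H_x → H_y`.  If `x` and `y` are both
systems of parameters, this natural map is injective, which gives one implication.

For the converse let `y` fail to be a system of parameters, and choose a nonmaximal prime `P`
containing `y` and a chain of primes of length `t` whose last but one term contains `P`.  For a
system of parameters adapted to the chain, the top local cohomology contains a nonzero submodule `D`
that is killed by a power of `P` and divisible by an element of the maximal ideal `m`.  Submodules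
of `H_y` killed by `P` have finite length because `y` is contained in `P`, and divisible modules of
finite length vanish by Nakayama's lemma; hence the image of `D` in `H_y` is killed by successively
smaller powers of `P`, so it is zero.  On the other hand `D` contains a nonzero socle element.  The
socle of the top local cohomology is finitely generated, so for one fixed system of parameters `u`
it lies in the image of `S / (u₁ⁿ, …, u_tⁿ)` for some fixed `n`.  If
`(x) ⊆ m^ℓ ⊆ (u₁ⁿ, …, u_tⁿ)`, the socle therefore lies in the image of `S / (x)^lim`, and the socle
element of `D` is a nonzero element of the kernel of the determinantal map.
-/

open IsLocalRing

/-- The limit closure `(x)^lim = ⋃_{n>0} ((x₁^{n+1}, …, x_r^{n+1}) :_R (x₁⋯x_r)^n)` of a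
sequence `x = x₁, …, x_r` of elements of `R`; the union of the increasing family of ideals
is expressed as a supremum. -/
def limitClosure {R : Type*} [CommRing R] {M : Type*} [AddCommGroup M] [Module R M]
    {r : ℕ} (x : Fin r → R) : Submodule R M :=
  ⨆ n : ℕ, (Ideal.span (Set.range fun i => x i ^ (n + 2)) • (⊤ : Submodule R M)).comap
    (LinearMap.lsmul R M ((∏ i, x i) ^ (n + 1)))

/-- The dimension of a module `M`: the Krull dimension of `R ⧸ Ann M`. -/
noncomputable def moduleDim (R M : Type*) [CommRing R] [AddCommGroup M] [Module R M] :
    WithBot ℕ∞ :=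
  ringKrullDim (R ⧸ Module.annihilator R M)

/-- A ring is catenary if, for any primes `p ≤ q`, all saturated chains of primes from `p`
to `q` have the same length. -/
def IsCatenaryRing (R : Type*) [CommRing R] : Prop :=
  ∀ p q : PrimeSpectrum R, p ≤ q →
    ∀ c₁ c₂ : LTSeries (PrimeSpectrum R),
      c₁.head = p → c₁.last = q → c₂.head = p → c₂.last = q →
      (∀ i : Fin c₁.length, c₁ i.castSucc ⋖ c₁ i.succ) →
      (∀ i : Fin c₂.length, c₂ i.castSucc ⋖ c₂ i.succ) →
      c₁.length = c₂.length

/-- The image of a sequence `x` of elements of a Noetherian local ring `R` is a system of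
parameters of `R/U` precisely when the ideal generated by the image is primary to the
maximal ideal of `R/U`, i.e. when `√((x) + U) = m`. -/
def IsSOPMod {R : Type*} [CommRing R] [IsLocalRing R] (U : Ideal R) {t : ℕ}
    (x : Fin t → R) : Prop :=
  (Ideal.span (Set.range x) ⊔ U).radical = maximalIdeal R

universe u

/-! ### Top local cohomology as a direct limit -/

section PowIdeal

variable {R : Type*} [CommRing R] {M N : Type*} [AddCommGroup M] [Module R M] [AddCommGroup N]
  [Module R N] {ι : Type*}

/-- The ideal `(x₁ⁿ, …, x_tⁿ)`; the exponent is applied pointwise to the function `x`. -/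
def powIdeal (x : ι → R) (n : ℕ) : Ideal R :=
  Ideal.span (Set.range (x ^ n))

theorem pow_mem_powIdeal (x : ι → R) (n : ℕ) (i : ι) : x i ^ n ∈ powIdeal x n :=
  Ideal.subset_span ⟨i, rfl⟩

theorem radical_span_range_le_radical_powIdeal (x : ι → R) (n : ℕ) :
    (Ideal.span (Set.range x)).radical ≤ (powIdeal x n).radical := by
  rw [Ideal.radical_le_radical_iff, Ideal.span_le]
  rintro _ ⟨i, rfl⟩
  exact ⟨n, pow_mem_powIdeal x n i⟩

theorem powIdeal_pow (x : ι → R) (m n : ℕ) : powIdeal (x ^ m) n = powIdeal x (m * n) := by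
  rw [powIdeal, powIdeal, pow_mul]

theorem map_mem_smul_top {I : Ideal R} (f : M →ₗ[R] N) {m : M}
    (hm : m ∈ I • (⊤ : Submodule R M)) : f m ∈ I • (⊤ : Submodule R N) :=
  Submodule.smul_top_le_comap_smul_top I f hm

theorem exists_mem_smul_top_of_surjective {I : Ideal R} {f : M →ₗ[R] N}
    (hf : Function.Surjective f) {n : N} (hn : n ∈ I • (⊤ : Submodule R N)) :
    ∃ m ∈ I • (⊤ : Submodule R M), f m = n := by
  rw [← LinearMap.range_eq_top.2 hf, LinearMap.range_eq_map, ← Submodule.map_smul''] at hn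
  exact hn

theorem prod_pow_smul_mem_powIdeal_smul [Fintype ι] (x : ι → R) {n : ℕ} (k : ℕ) {m : M}
    (hm : m ∈ powIdeal x n • (⊤ : Submodule R M)) :
    (∏ i, x i) ^ k • m ∈ powIdeal x (n + k) • (⊤ : Submodule R M) := by
  have hmul : Ideal.span {(∏ i, x i) ^ k} * powIdeal x n ≤ powIdeal x (n + k) := by
    rw [powIdeal, Ideal.span_mul_span', Ideal.span_le]
    rintro _ ⟨_, rfl, _, ⟨i, rfl⟩, rfl⟩
    obtain ⟨c, hc⟩ := Finset.dvd_prod_of_mem x (Finset.mem_univ i)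
    exact Ideal.mem_of_dvd _ ⟨c ^ k, by simp only [hc, Pi.pow_apply]; ring⟩
      (pow_mem_powIdeal x (n + k) i)
  refine Submodule.smul_mono_left hmul ?_
  rw [Submodule.mul_smul]
  exact Submodule.smul_mem_smul (Ideal.mem_span_singleton_self _) hm

open scoped Pointwise in
theorem powIdeal_cons_smul_top {t : ℕ} (z : R) (w : Fin t → R) (n : ℕ) :
    powIdeal (Fin.cons z w : Fin (t + 1) → R) n • (⊤ : Submodule R M) =
      z ^ n • ⊤ ⊔ powIdeal w n • ⊤ := by
  have hrange : Set.range ((Fin.cons z w : Fin (t + 1) → R) ^ n) =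
      insert (z ^ n) (Set.range (w ^ n)) := by
    rw [← Fin.range_cons]
    exact congrArg Set.range (funext (Fin.cases rfl fun _ => rfl))
  rw [powIdeal, hrange, Ideal.span_insert, Submodule.sup_smul,
    Submodule.ideal_span_singleton_smul, powIdeal]

end PowIdeal

section TopLocalCohomology

variable {R : Type*} [CommRing R] {M : Type*} [AddCommGroup M] [Module R M]

/-- `φ` exhibits `H` as the top local cohomology module of `M` with respect to the sequence `x`,
that is as the direct limit of the modules `M / (x₁ⁿ, …, x_tⁿ) M` along multiplication by
`x₁ ⋯ x_t`; the element `φ n m` is the generalized fraction `[m / (x₁ ⋯ x_t)ⁿ]`. -/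
structure IsTopLocalCohomology {ι : Type*} [Fintype ι] (x : ι → R) {H : Type*} [AddCommGroup H]
    [Module R H] (φ : ℕ → M →ₗ[R] H) : Prop where
  exists_eq : ∀ h, ∃ n m, φ n m = h
  eq_zero_iff : ∀ n m,
    φ n m = 0 ↔ ∃ k, (∏ i, x i) ^ k • m ∈ powIdeal x (n + k) • (⊤ : Submodule R M)
  map_succ_smul : ∀ n m, φ (n + 1) ((∏ i, x i) • m) = φ n m

namespace IsTopLocalCohomology

section

variable {ι : Type*} [Fintype ι] {x : ι → R} {H H' : Type*} [AddCommGroup H] [Module R H]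
  [AddCommGroup H'] [Module R H'] {φ : ℕ → M →ₗ[R] H}

theorem map_add_smul (h : IsTopLocalCohomology x φ) (n k : ℕ) (m : M) :
    φ (n + k) ((∏ i, x i) ^ k • m) = φ n m := by
  induction k with
  | zero => simp
  | succ k ih => rw [pow_succ', mul_smul, ← add_assoc, h.map_succ_smul, ih]

theorem exists_add_eq (h : IsTopLocalCohomology x φ) (n : ℕ) (b : H) :
    ∃ k m, φ (n + k) m = b := by
  obtain ⟨p, m, rfl⟩ := h.exists_eq b
  exact ⟨p, (∏ i, x i) ^ n • m, by rw [add_comm, h.map_add_smul]⟩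

theorem map_eq_zero_of_mem (h : IsTopLocalCohomology x φ) {n : ℕ} {m : M}
    (hm : m ∈ powIdeal x n • (⊤ : Submodule R M)) : φ n m = 0 :=
  (h.eq_zero_iff n m).2 ⟨0, by simpa using hm⟩

theorem exists_lift (h : IsTopLocalCohomology x φ) (ψ : ℕ → M →ₗ[R] H')
    (hsucc : ∀ n m, ψ (n + 1) ((∏ i, x i) • m) = ψ n m)
    (hzero : ∀ n m, φ n m = 0 → ψ n m = 0) :
    ∃ f : H →ₗ[R] H', ∀ n m, f (φ n m) = ψ n m := by
  have hadd (n k m) : ψ (n + k) ((∏ i, x i) ^ k • m) = ψ n m := by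
    induction k with
    | zero => simp
    | succ k ih => rw [pow_succ', mul_smul, ← add_assoc, hsucc, ih]
  have well_defined {n n' m m'} (e : φ n m = φ n' m') : ψ n m = ψ n' m' := by
    rw [← hadd n n', ← hadd n' n, add_comm n', ← sub_eq_zero, ← map_sub]
    apply hzero
    rw [map_sub, h.map_add_smul, add_comm, h.map_add_smul, e, sub_self]
  choose N m hm using h.exists_eq
  refine ⟨⟨⟨fun b => ψ (N b) (m b), fun a b => ?_⟩, fun r b => ?_⟩,
    fun n m' => well_defined (hm _)⟩
  · rw [← hadd (N a) (N b), ← hadd (N b) (N a), add_comm (N b), ← map_add]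
    refine well_defined ?_
    rw [hm, map_add, h.map_add_smul, add_comm (N a), h.map_add_smul, hm, hm]
  · rw [RingHom.id_apply, ← map_smul]
    exact well_defined (by rw [hm, map_smul, hm])

theorem exists_linearEquiv (h : IsTopLocalCohomology x φ) {ψ : ℕ → M →ₗ[R] H'}
    (h' : IsTopLocalCohomology x ψ) : ∃ f : H ≃ₗ[R] H', ∀ n m, f (φ n m) = ψ n m := by
  have hiff (n m) : φ n m = 0 ↔ ψ n m = 0 := by rw [h.eq_zero_iff, h'.eq_zero_iff]
  obtain ⟨f, hf⟩ := h.exists_lift ψ h'.map_succ_smul fun n m => (hiff n m).1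
  have hinj : Function.Injective f := by
    rw [injective_iff_map_eq_zero]
    intro b hb
    obtain ⟨n, m, rfl⟩ := h.exists_eq b
    rwa [hf, ← hiff] at hb
  have hsurj : Function.Surjective f := fun b =>
    let ⟨n, m, hm⟩ := h'.exists_eq b
    ⟨φ n m, (hf n m).trans hm⟩
  exact ⟨LinearEquiv.ofBijective f ⟨hinj, hsurj⟩, hf⟩

theorem comp_of_surjective {M' : Type*} [AddCommGroup M'] [Module R M'] {φ : ℕ → M' →ₗ[R] H}
    (h : IsTopLocalCohomology x φ) {f : M →ₗ[R] M'} (hf : Function.Surjective f)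
    (hker : ∀ m, f m = 0 → ∃ k, (∏ i, x i) ^ k • m = 0) :
    IsTopLocalCohomology x fun n => φ n ∘ₗ f where
  exists_eq b := by
    obtain ⟨n, m, rfl⟩ := h.exists_eq b
    obtain ⟨m, rfl⟩ := hf m
    exact ⟨n, m, rfl⟩
  map_succ_smul n m := by
    rw [LinearMap.comp_apply, map_smul, h.map_succ_smul, LinearMap.comp_apply]
  eq_zero_iff n m := by
    rw [LinearMap.comp_apply, h.eq_zero_iff]
    constructor
    · rintro ⟨k, hk⟩
      obtain ⟨s, hs, hsm⟩ := exists_mem_smul_top_of_surjective hf hk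
      obtain ⟨j, hj⟩ := hker (s - (∏ i, x i) ^ k • m) (by rw [map_sub, map_smul, hsm, sub_self])
      refine ⟨k + j, ?_⟩
      rw [add_comm k j, pow_add, mul_smul, add_comm j k, ← add_assoc,
        ← sub_eq_zero.1 ((smul_sub _ _ _).symm.trans hj)]
      exact prod_pow_smul_mem_powIdeal_smul x j hs
    · rintro ⟨k, hk⟩
      exact ⟨k, by simpa only [map_smul] using map_mem_smul_top f hk⟩

open scoped Pointwise in
theorem quotSMulTop (h : IsTopLocalCohomology x φ) (r : R) :
    IsTopLocalCohomology x fun n => QuotSMulTop.map r (φ n) where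
  exists_eq b := by
    obtain ⟨b, rfl⟩ := Submodule.mkQ_surjective _ b
    obtain ⟨n, m, rfl⟩ := h.exists_eq b
    exact ⟨n, Submodule.Quotient.mk m, rfl⟩
  map_succ_smul n m := by
    obtain ⟨m, rfl⟩ := Submodule.mkQ_surjective _ m
    exact congrArg Submodule.Quotient.mk (h.map_succ_smul n m)
  eq_zero_iff n m := by
    obtain ⟨m, rfl⟩ := Submodule.mkQ_surjective _ m
    rw [Submodule.mkQ_apply, QuotSMulTop.map_apply_mk, Submodule.Quotient.mk_eq_zero,
      Submodule.mem_smul_pointwise_iff_exists]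
    simp only [Submodule.mem_top, true_and]
    constructor
    · rintro ⟨b, hb⟩
      obtain ⟨k, m', rfl⟩ := h.exists_add_eq n b
      rw [← h.map_add_smul n k, ← map_smul, eq_comm, ← sub_eq_zero, ← map_sub, h.eq_zero_iff] at hb
      obtain ⟨j, hj⟩ := hb
      have hclass : Submodule.Quotient.mk (p := r • (⊤ : Submodule R M)) ((∏ i, x i) ^ j •
          ((∏ i, x i) ^ k • m - r • m')) = (∏ i, x i) ^ (k + j) • Submodule.Quotient.mk m := by
        rw [← Submodule.Quotient.mk_smul, Submodule.Quotient.eq,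
          Submodule.mem_smul_pointwise_iff_exists]
        exact ⟨-(∏ i, x i) ^ j • m', trivial, by module⟩
      exact ⟨k + j, hclass ▸ add_assoc n k j ▸ map_mem_smul_top (Submodule.mkQ _) hj⟩
    · rintro ⟨k, hk⟩
      obtain ⟨s, hs, hsm⟩ := exists_mem_smul_top_of_surjective (Submodule.mkQ_surjective _) hk
      rw [← Submodule.Quotient.mk_smul, Submodule.mkQ_apply, eq_comm, Submodule.Quotient.eq,
        Submodule.mem_smul_pointwise_iff_exists] at hsm
      obtain ⟨m', -, hm'⟩ := hsm
      refine ⟨φ (n + k) m', ?_⟩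
      rw [← map_smul, hm', map_sub, h.map_add_smul, h.map_eq_zero_of_mem hs, sub_zero]

end

theorem of_isEmpty {ι : Type*} [Fintype ι] [IsEmpty ι] (x : ι → R) :
    IsTopLocalCohomology x fun _ => (LinearMap.id : M →ₗ[R] M) where
  exists_eq h := ⟨0, h, rfl⟩
  eq_zero_iff n m := by simp [powIdeal, Set.range_eq_empty]
  map_succ_smul _ m := by simp

end IsTopLocalCohomology

end TopLocalCohomology

/-! ### First local cohomology with respect to one element -/

section FirstLocalCohomology

variable {R : Type*} [CommRing R] {M : Type*} [AddCommGroup M] [Module R M]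

/-- The localization `M_z`, regarded as an `R`-module. -/
abbrev LocalizationAway (z : R) (M : Type*) [AddCommGroup M] [Module R M] : Type _ :=
  LocalizedModule (Submonoid.powers z) M

/-- The map `m ↦ m / zᵏ` from `M` to `M_z`. -/
noncomputable def divPow (z : R) (k : ℕ) : M →ₗ[R] LocalizationAway z M :=
  LocalizedModule.divBy ⟨z ^ k, k, rfl⟩ ∘ₗ LocalizedModule.mkLinearMap _ M

theorem divPow_apply (z : R) (k : ℕ) (m : M) :
    divPow z k m = LocalizedModule.mk m (⟨z ^ k, k, rfl⟩ : Submonoid.powers z) := by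
  rw [divPow, LinearMap.comp_apply, LocalizedModule.mkLinearMap_apply, LocalizedModule.divBy_apply,
    LocalizedModule.liftOn_mk, one_mul]

theorem exists_divPow_eq (z : R) (ν : LocalizationAway z M) : ∃ k m, divPow z k m = ν := by
  induction ν using LocalizedModule.induction_on with
  | _ m s =>
    obtain ⟨_, k, rfl⟩ := s
    exact ⟨k, m, divPow_apply z k m⟩

theorem divPow_eq_zero_iff {z : R} {k : ℕ} {m : M} :
    divPow z k m = 0 ↔ m ∈ Submodule.torsion' R M (Submonoid.powers z) := by
  rw [divPow_apply, ← LocalizedModule.zero_mk (M := M) (S := Submonoid.powers z) 1,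
    LocalizedModule.mk_eq]
  simp

theorem mem_torsion'_powers {z : R} {m : M} :
    m ∈ Submodule.torsion' R M (Submonoid.powers z) ↔ ∃ i : ℕ, z ^ i • m = 0 := by
  simp [Submodule.mem_torsion'_iff, Submonoid.mem_powers_iff, Submonoid.smul_def]

theorem divPow_add_smul (z : R) (k j : ℕ) (m : M) :
    divPow z (k + j) (z ^ j • m) = divPow z k m := by
  rw [divPow_apply, divPow_apply, LocalizedModule.mk_eq]
  exact ⟨1, by simp only [one_smul, Submonoid.smul_def, smul_smul, pow_add]⟩

theorem divPow_pow_smul (z : R) (k : ℕ) (m : M) : divPow z k (z ^ k • m) = divPow z 0 m := by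
  simpa using divPow_add_smul z 0 k m

/-- The cokernel of `M → M_z`, which is the first local cohomology module of `M` with respect
to `z`. -/
abbrev FirstLocalCohomology (z : R) (M : Type*) [AddCommGroup M] [Module R M] : Type _ :=
  LocalizationAway z M ⧸ (divPow z 0 : M →ₗ[R] LocalizationAway z M).range

namespace FirstLocalCohomology

/-- The map `m ↦ [m / zᵏ]` from `M` to the cokernel of `M → M_z`. -/
noncomputable def mk (z : R) (k : ℕ) : M →ₗ[R] FirstLocalCohomology z M :=
  Submodule.mkQ _ ∘ₗ divPow z k

theorem exists_mk_eq (z : R) (ν : FirstLocalCohomology z M) : ∃ k m, mk z k m = ν := by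
  obtain ⟨ν, rfl⟩ := Submodule.mkQ_surjective _ ν
  obtain ⟨k, m, rfl⟩ := exists_divPow_eq z ν
  exact ⟨k, m, rfl⟩

theorem mk_add_smul (z : R) (k j : ℕ) (m : M) : mk z (k + j) (z ^ j • m) = mk z k m := by
  simp only [mk, LinearMap.comp_apply, divPow_add_smul]

theorem mk_eq_zero_iff {z : R} {k : ℕ} {m : M} :
    mk z k m = 0 ↔ ∃ i, ∃ m' : M, z ^ i • m = z ^ (i + k) • m' := by
  have hsub (m' : M) : divPow z 0 m' = divPow z k m ↔ ∃ i : ℕ, z ^ i • m = z ^ (i + k) • m' := by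
    rw [← divPow_pow_smul z k, eq_comm, ← sub_eq_zero, ← map_sub, divPow_eq_zero_iff,
      mem_torsion'_powers]
    simp only [smul_sub, sub_eq_zero, smul_smul, ← pow_add]
  rw [mk, LinearMap.comp_apply, Submodule.mkQ_apply, Submodule.Quotient.mk_eq_zero,
    LinearMap.mem_range]
  simp only [hsub]
  exact exists_comm

end FirstLocalCohomology

namespace IsTopLocalCohomology

variable {t : ℕ} {w : Fin t → R} {H : Type*} [AddCommGroup H] [Module R H] {φ : ℕ → M →ₗ[R] H}

open scoped Pointwise in
/-- Top local cohomology with respect to `z, w` is the first local cohomology with respect to `z`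
of the top local cohomology with respect to `w`. -/
theorem cons (h : IsTopLocalCohomology w φ) (z : R) :
    IsTopLocalCohomology (Fin.cons z w : Fin (t + 1) → R)
      fun n => FirstLocalCohomology.mk z n ∘ₗ φ n where
  exists_eq b := by
    obtain ⟨k, b, rfl⟩ := FirstLocalCohomology.exists_mk_eq z b
    obtain ⟨n, m, rfl⟩ := h.exists_eq b
    refine ⟨k + n, z ^ n • (∏ i, w i) ^ k • m, ?_⟩
    rw [LinearMap.comp_apply, map_smul, add_comm k n, h.map_add_smul, add_comm n k,
      FirstLocalCohomology.mk_add_smul]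
  map_succ_smul n m := by
    rw [LinearMap.comp_apply, Fin.prod_univ_succ, mul_smul, map_smul]
    simpa [h.map_succ_smul] using FirstLocalCohomology.mk_add_smul z n 1 (φ n m)
  eq_zero_iff n m := by
    have hprod : ∏ i, (Fin.cons z w : Fin (t + 1) → R) i = z * ∏ i, w i := by
      simp [Fin.prod_univ_succ]
    simp only [LinearMap.comp_apply, FirstLocalCohomology.mk_eq_zero_iff, powIdeal_cons_smul_top,
      Submodule.mem_sup, Submodule.mem_smul_pointwise_iff_exists, hprod]
    constructor
    · rintro ⟨i, b, hb⟩
      obtain ⟨k, m', rfl⟩ := h.exists_add_eq n b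
      rw [← h.map_add_smul n k, ← map_smul, ← map_smul, ← sub_eq_zero, ← map_sub,
        h.eq_zero_iff] at hb
      obtain ⟨j, hj⟩ := hb
      have hs := prod_pow_smul_mem_powIdeal_smul w i hj
      rw [show n + k + j + i = n + (i + (k + j)) by ring] at hs
      exact ⟨i + (k + j), _, ⟨(∏ i, w i) ^ (j + i) • m', trivial, rfl⟩, _,
        Submodule.smul_mem _ (z ^ (k + j)) hs, by module⟩
    · rintro ⟨k, _, ⟨m', -, rfl⟩, s, hs, e⟩
      refine ⟨k, φ (n + k) m', ?_⟩
      rw [← map_smul (φ (n + k)), add_comm k n, ← add_zero (φ (n + k) _),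
        ← h.map_eq_zero_of_mem hs, ← map_add, e, mul_pow, mul_smul, map_smul, h.map_add_smul]

end IsTopLocalCohomology

theorem exists_isTopLocalCohomology {R : Type u} [CommRing R] {t : ℕ} (x : Fin t → R) (M : Type u)
    [AddCommGroup M] [Module R M] :
    ∃ (H : Type u) (_ : AddCommGroup H) (_ : Module R H) (φ : ℕ → M →ₗ[R] H),
      IsTopLocalCohomology x φ := by
  induction t with
  | zero => exact ⟨M, _, _, _, .of_isEmpty x⟩
  | succ t ih =>
    obtain ⟨H, _, _, φ, hφ⟩ := ih (Fin.tail x)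
    exact ⟨_, _, _, _, Fin.cons_self_tail x ▸ hφ.cons (x 0)⟩

end FirstLocalCohomology

/-! ### Determinantal maps -/

section Determinantal

open scoped Matrix

variable {R : Type*} [CommRing R] {ι : Type*} [Fintype ι]

theorem mulVec_apply_mem_span_range (A : Matrix ι ι R) (x : ι → R) (i : ι) :
    (A *ᵥ x) i ∈ Ideal.span (Set.range x) :=
  Ideal.mem_span_range_iff_exists_fun.2 ⟨A i, rfl⟩

theorem exists_mulVec_eq {x y : ι → R} (hxy : ∀ i, y i ∈ Ideal.span (Set.range x)) :
    ∃ A : Matrix ι ι R, A *ᵥ x = y := by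
  choose A hA using fun i => Ideal.mem_span_range_iff_exists_fun.1 (hxy i)
  exact ⟨A, funext hA⟩

theorem exists_mulVec_pow_eq_pow {x y : ι → R}
    (hxy : ∀ i, y i ∈ (Ideal.span (Set.range x)).radical) (n : ℕ) :
    ∃ N, ∃ A : Matrix ι ι R, A *ᵥ (x ^ n) = y ^ N := by
  choose N hN using fun i => radical_span_range_le_radical_powIdeal x n (hxy i)
  exact ⟨∑ i, N i, exists_mulVec_eq fun i => Ideal.pow_mem_of_pow_mem _ (hN i) <|
    Finset.single_le_sum (fun _ _ => Nat.zero_le _) (Finset.mem_univ i)⟩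

variable [DecidableEq ι]

theorem det_mul_mem_span_range_mulVec (A : Matrix ι ι R) {x : ι → R} {r : R}
    (hr : r ∈ Ideal.span (Set.range x)) : A.det * r ∈ Ideal.span (Set.range (A *ᵥ x)) := by
  obtain ⟨c, rfl⟩ := Ideal.mem_span_range_iff_exists_fun.1 hr
  have cramer : A.det • x = A.adjugate *ᵥ (A *ᵥ x) := by
    rw [Matrix.mulVec_mulVec, Matrix.adjugate_mul, Matrix.smul_mulVec, Matrix.one_mulVec]
  rw [Finset.mul_sum]
  refine Ideal.sum_mem _ fun j _ => ?_
  rw [mul_left_comm, ← smul_eq_mul A.det, ← Pi.smul_apply, cramer]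
  exact Ideal.mul_mem_left _ _ (Ideal.mem_span_range_iff_exists_fun.2 ⟨A.adjugate j, rfl⟩)

theorem prod_mul_det_mem_powIdeal {A : Matrix ι ι R} {x y : ι → R} {k : ι}
    (hA : A *ᵥ x = Function.update y k 0) (hk : y k ∈ Ideal.span (Set.range x)) :
    (∏ i, y i) * A.det ∈ powIdeal y 2 := by
  have hdet := hA ▸ det_mul_mem_span_range_mulVec A hk
  have hle : Ideal.span (Set.range (Function.update y k 0)) ≤
      Submodule.comap (LinearMap.mulLeft R (∏ i ∈ Finset.univ.erase k, y i)) (powIdeal y 2) := by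
    rw [Ideal.span_le]
    rintro _ ⟨i, rfl⟩
    rcases eq_or_ne i k with rfl | hi
    · simp
    · rw [Function.update_of_ne hi]
      obtain ⟨c, hc⟩ := Finset.dvd_prod_of_mem y (Finset.mem_erase.2 ⟨hi, Finset.mem_univ i⟩)
      rw [SetLike.mem_coe, Submodule.mem_comap, LinearMap.mulLeft_apply, hc]
      exact Ideal.mem_of_dvd _ ⟨c, by ring⟩ (pow_mem_powIdeal y 2 i)
  rw [← Finset.mul_prod_erase _ _ (Finset.mem_univ k), mul_right_comm, mul_comm,
    mul_comm (y k)]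
  exact hle hdet

/-- The rows of `A` are exchanged for those of `B` one at a time. -/
theorem prod_mul_det_sub_det_mem_powIdeal {A B : Matrix ι ι R} {x y : ι → R} (hA : A *ᵥ x = y)
    (hB : B *ᵥ x = y) : (∏ i, y i) * (A.det - B.det) ∈ powIdeal y 2 := by
  suffices h : ∀ (s : Finset ι) (A : Matrix ι ι R), A *ᵥ x = y → (∀ i ∉ s, A i = B i) →
      (∏ i, y i) * (A.det - B.det) ∈ powIdeal y 2 from
    h Finset.univ A hA fun i hi => absurd (Finset.mem_univ i) hi
  intro s
  induction s using Finset.induction_on with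
  | empty =>
    intro A _ hAB
    rw [show A = B from funext fun i => hAB i (Finset.notMem_empty i), sub_self, mul_zero]
    exact Ideal.zero_mem _
  | insert k s _ ih =>
    intro A hA hAB
    have hdiff : A.det - (A.updateRow k (B k)).det = (A.updateRow k (A k - B k)).det := by
      rw [sub_eq_iff_eq_add, ← Matrix.det_updateRow_add, sub_add_cancel, Matrix.updateRow_eq_self]
    have hrow (b : ι → R) : A.updateRow k b *ᵥ x = Function.update y k (b ⬝ᵥ x) := by
      ext i
      rcases eq_or_ne i k with rfl | hi
      · simp [Matrix.mulVec]
      · simpa [Matrix.mulVec, hi] using congrFun hA i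
    have hk : y k = B k ⬝ᵥ x := (congrFun hB k).symm
    have hzero : A.updateRow k (A k - B k) *ᵥ x = Function.update y k 0 := by
      rw [hrow, sub_dotProduct, ← hk, show A k ⬝ᵥ x = y k from congrFun hA k, sub_self]
    rw [← sub_add_sub_cancel _ (A.updateRow k (B k)).det, mul_add]
    refine Ideal.add_mem _ (hdiff ▸ prod_mul_det_mem_powIdeal hzero
      (Ideal.mem_span_range_iff_exists_fun.2 ⟨B k, hk.symm⟩)) (ih _ ?_ fun i hi => ?_)
    · rw [hrow, ← hk, Function.update_eq_self]
    · rcases eq_or_ne i k with rfl | hik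
      · exact Matrix.updateRow_self
      · rw [Matrix.updateRow_ne hik, hAB i (by simp [hik, hi])]

variable {M : Type*} [AddCommGroup M] [Module R M] {H H' : Type*} [AddCommGroup H] [Module R H]
  [AddCommGroup H'] [Module R H'] {x y : ι → R} {φ : ℕ → M →ₗ[R] H} {ψ : ℕ → M →ₗ[R] H'}

theorem IsTopLocalCohomology.map_det_smul_eq (hψ : IsTopLocalCohomology y ψ) {n N N' : ℕ}
    {A A' : Matrix ι ι R} (hA : A *ᵥ (x ^ n) = y ^ N) (hA' : A' *ᵥ (x ^ n) = y ^ N') (m : M) :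
    ψ N (A.det • m) = ψ N' (A'.det • m) := by
  have hdiag {k l : ℕ} {B : Matrix ι ι R} (hB : B *ᵥ (x ^ n) = y ^ k) :
      (Matrix.diagonal (y ^ l) * B) *ᵥ (x ^ n) = y ^ (l + k) := by
    rw [← Matrix.mulVec_mulVec, hB, pow_add]
    exact funext fun i => Matrix.mulVec_diagonal _ _ i
  have hmem := prod_mul_det_sub_det_mem_powIdeal (hdiag (l := N') hA)
    (add_comm N' N ▸ hdiag (l := N) hA')
  simp only [Matrix.det_mul, Matrix.det_diagonal, Pi.pow_apply, Finset.prod_pow,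
    powIdeal_pow] at hmem
  rw [← hψ.map_add_smul N N', ← hψ.map_add_smul N' N, add_comm N N', ← sub_eq_zero, ← map_sub,
    hψ.eq_zero_iff]
  refine ⟨N' + N, ?_⟩
  simpa only [smul_sub, smul_smul, sub_smul, mul_sub, mul_two] using
    Submodule.smul_mem_smul hmem (Submodule.mem_top (x := m))

/-- `θ` is the natural map between the top local cohomology modules `H` and `H'` with respect to
`x` and `y` (with structure maps `φ` and `ψ`): whenever `yᴺ = A xⁿ`, where powers of sequences are
taken pointwise, it is given by `det A` on the classes of level `n`. -/
def IsDeterminantalMap (x y : ι → R) (φ : ℕ → M →ₗ[R] H) (ψ : ℕ → M →ₗ[R] H')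
    (θ : H →ₗ[R] H') : Prop :=
  ∀ n N (A : Matrix ι ι R), A *ᵥ (x ^ n) = y ^ N → ∀ m, θ (φ n m) = ψ N (A.det • m)

theorem IsTopLocalCohomology.exists_isDeterminantalMap (hφ : IsTopLocalCohomology x φ)
    (hψ : IsTopLocalCohomology y ψ) (hxy : ∀ i, y i ∈ (Ideal.span (Set.range x)).radical) :
    ∃ θ : H →ₗ[R] H', IsDeterminantalMap x y φ ψ θ := by
  choose N A hA using exists_mulVec_pow_eq_pow hxy
  have hadd (k n m) : ψ (N (n + k)) ((A (n + k)).det • (∏ i, x i) ^ k • m) =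
      ψ (N n) ((A n).det • m) := by
    have hmul : (A (n + k) * Matrix.diagonal (x ^ k)) *ᵥ (x ^ n) = y ^ N (n + k) := by
      rw [← Matrix.mulVec_mulVec, ← hA (n + k), add_comm, pow_add]
      exact congrArg _ (funext fun i => Matrix.mulVec_diagonal _ _ i)
    rw [hψ.map_det_smul_eq (hA n) hmul, Matrix.det_mul, Matrix.det_diagonal, mul_smul]
    simp only [Pi.pow_apply, Finset.prod_pow]
  obtain ⟨θ, hθ⟩ := hφ.exists_lift (fun n => ψ (N n) ∘ₗ LinearMap.lsmul R M (A n).det)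
    (fun n m => by
      simpa only [pow_one, LinearMap.comp_apply, LinearMap.lsmul_apply] using hadd 1 n m)
    fun n m hm => by
      obtain ⟨k, hk⟩ := (hφ.eq_zero_iff n m).1 hm
      rw [LinearMap.comp_apply, LinearMap.lsmul_apply, ← hadd k]
      refine hψ.map_eq_zero_of_mem ?_
      have hle : Ideal.span {(A (n + k)).det} * powIdeal x (n + k) ≤ powIdeal y (N (n + k)) := by
        rw [Ideal.span_singleton_mul_le_iff, powIdeal, powIdeal, ← hA]
        exact fun r hr => det_mul_mem_span_range_mulVec _ hr
      refine Submodule.smul_mono_left hle ?_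
      rw [Submodule.mul_smul]
      exact Submodule.smul_mem_smul (Ideal.mem_span_singleton_self _) hk
  exact ⟨θ, fun n N' A' hA' m => (hθ n m).trans (hψ.map_det_smul_eq (hA n) hA' m)⟩

/-- The natural map in the other direction is a left inverse. -/
theorem IsDeterminantalMap.injective {θ : H →ₗ[R] H'} (hθ : IsDeterminantalMap x y φ ψ θ)
    (hφ : IsTopLocalCohomology x φ) (hψ : IsTopLocalCohomology y ψ)
    (hxy : ∀ i, y i ∈ (Ideal.span (Set.range x)).radical)
    (hyx : ∀ i, x i ∈ (Ideal.span (Set.range y)).radical) : Function.Injective θ := by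
  obtain ⟨θ', hθ'⟩ := hψ.exists_isDeterminantalMap hφ hyx
  refine Function.LeftInverse.injective (g := θ') fun b => ?_
  obtain ⟨n, m, rfl⟩ := hφ.exists_eq b
  obtain ⟨N, A, hA⟩ := exists_mulVec_pow_eq_pow hxy n
  obtain ⟨n', B, hB⟩ := exists_mulVec_pow_eq_pow hyx N
  have hBA : (B * A) *ᵥ (x ^ n) = x ^ n' := by rw [← Matrix.mulVec_mulVec, hA, hB]
  rw [hθ n N A hA, hθ' N n' B hB, smul_smul, ← Matrix.det_mul,
    ← hφ.map_det_smul_eq (Matrix.one_mulVec _) hBA, Matrix.det_one, one_smul]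

end Determinantal

/-! ### Limit closures and modules of small dimension -/

section LimitClosure

variable {R : Type*} [CommRing R] {M : Type*} [AddCommGroup M] [Module R M] {t : ℕ}

theorem map_powIdeal {S : Type*} [CommRing S] (f : R →+* S) {ι : Type*} (x : ι → R) (n : ℕ) :
    (powIdeal x n).map f = powIdeal (f ∘ x) n := by
  rw [powIdeal, Ideal.map_span, ← Set.range_comp]
  exact congrArg (fun y => Ideal.span (Set.range y)) (funext fun i => map_pow f _ _)

theorem mem_limitClosure_iff {x : Fin t → R} {m : M} :
    m ∈ limitClosure x ↔ ∃ k, (∏ i, x i) ^ k • m ∈ powIdeal x (k + 1) • (⊤ : Submodule R M) := by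
  have hmono : Monotone fun n : ℕ => (powIdeal x (n + 2) • (⊤ : Submodule R M)).comap
      (LinearMap.lsmul R M ((∏ i, x i) ^ (n + 1))) := by
    refine monotone_nat_of_le_succ fun n m hm => ?_
    simpa [smul_smul, ← pow_succ'] using prod_pow_smul_mem_powIdeal_smul x 1 hm
  refine (Submodule.mem_iSup_of_directed _ hmono.directed_le).trans
    ⟨fun ⟨n, hn⟩ => ⟨n + 1, hn⟩, fun ⟨k, hk⟩ => ⟨k, ?_⟩⟩
  simpa [smul_smul, ← pow_succ'] using prod_pow_smul_mem_powIdeal_smul x 1 hk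

theorem IsTopLocalCohomology.mem_limitClosure_iff {x : Fin t → R} {H : Type*} [AddCommGroup H]
    [Module R H] {φ : ℕ → M →ₗ[R] H} (h : IsTopLocalCohomology x φ) {m : M} :
    m ∈ limitClosure x ↔ φ 1 m = 0 := by
  simp only [_root_.mem_limitClosure_iff, h.eq_zero_iff, add_comm]

/-- The boundary monoid of an element `z`: all `zᵏ (1 + a z)`.  Inverting it removes every
maximal ideal, hence lowers the dimension. -/
def boundaryMonoid (z : R) : Submonoid R where
  carrier := {s | ∃ k a, s = z ^ k * (1 + a * z)}
  one_mem' := ⟨0, 0, by simp⟩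
  mul_mem' := by
    rintro _ _ ⟨k, a, rfl⟩ ⟨l, b, rfl⟩
    exact ⟨k + l, a + b + a * b * z, by ring⟩

theorem exists_gt_of_disjoint_boundaryMonoid {z : R} {p : PrimeSpectrum R}
    (hp : Disjoint (boundaryMonoid z : Set R) p.asIdeal) : ∃ q, p < q := by
  rw [Set.disjoint_left] at hp
  have hne : p.asIdeal ⊔ Ideal.span {z} ≠ ⊤ := by
    rw [Ne, Ideal.eq_top_iff_one, Submodule.mem_sup]
    rintro ⟨e, he, _, hb, h1⟩
    obtain ⟨a, rfl⟩ := Ideal.mem_span_singleton'.1 hb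
    exact hp ⟨0, -a, by rw [← h1]; ring⟩ he
  obtain ⟨m, hm, hle⟩ := Ideal.exists_le_maximal _ hne
  refine ⟨⟨m, hm.isPrime⟩, lt_of_le_of_ne (le_sup_left.trans hle) fun h => ?_⟩
  refine hp (a := z) ⟨1, 0, by simp⟩ (h ▸ ?_)
  exact hle (Ideal.mem_sup_right (Ideal.mem_span_singleton_self z))

theorem ringKrullDim_localization_boundaryMonoid_add_one_le (z : R) :
    ringKrullDim (Localization (boundaryMonoid z)) + 1 ≤ ringKrullDim R := by
  have hmono : StrictMono (PrimeSpectrum.comap (algebraMap R (Localization (boundaryMonoid z)))) :=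
    Monotone.strictMono_of_injective (fun _ _ h => Ideal.comap_mono h)
      (PrimeSpectrum.localization_comap_injective _ (boundaryMonoid z))
  rcases subsingleton_or_nontrivial (Localization (boundaryMonoid z)) with hB | hB
  · simp [ringKrullDim_eq_bot_of_subsingleton]
  have := (algebraMap R (Localization (boundaryMonoid z))).domain_nontrivial
  rw [ringKrullDim, ringKrullDim, Order.krullDim_eq_iSup_length, Order.krullDim_eq_iSup_length,
    ← WithBot.coe_one, ← WithBot.coe_add, ENat.iSup_add, WithBot.coe_le_coe, iSup_le_iff]
  intro p
  have hdisj : (p.map _ hmono).last ∈ {q : PrimeSpectrum R |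
      Disjoint (boundaryMonoid z : Set R) q.asIdeal} := by
    rw [LTSeries.last_map, ← PrimeSpectrum.localization_comap_range
      (Localization (boundaryMonoid z))]
    exact ⟨_, rfl⟩
  obtain ⟨q, hq⟩ := exists_gt_of_disjoint_boundaryMonoid hdisj
  exact le_trans (by simp) (le_iSup _ ((p.map _ hmono).snoc q hq))

/-- The induction localizes at the boundary monoid of one element. -/
theorem exists_prod_pow_mem_powIdeal {A : Type u} [CommRing A] (hA : ringKrullDim A < t)
    (y : Fin t → A) : ∃ n, (∏ i, y i) ^ n ∈ powIdeal y (n + 1) := by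
  induction t generalizing A with
  | zero =>
    have : Subsingleton A := by
      by_contra! h
      exact hA.not_ge ringKrullDim_nonneg_of_nontrivial
    exact ⟨0, by simp [Subsingleton.elim _ (0 : A)]⟩
  | succ t ih =>
    obtain ⟨z, w, rfl⟩ : ∃ z w, y = Fin.cons z w := ⟨_, _, (Fin.cons_self_tail y).symm⟩
    let B := Localization (boundaryMonoid z)
    have hB : ringKrullDim B < t := by
      by_contra! h
      refine hA.not_ge (le_trans ?_ (ringKrullDim_localization_boundaryMonoid_add_one_le z))
      exact_mod_cast add_le_add_left h 1
    obtain ⟨n, hn⟩ := ih hB (algebraMap A B ∘ w)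
    simp only [Function.comp_apply, ← map_prod, ← map_pow, ← map_powIdeal] at hn
    rw [IsLocalization.algebraMap_mem_map_algebraMap_iff (boundaryMonoid z)] at hn
    obtain ⟨_, ⟨k, a, rfl⟩, hs⟩ := hn
    have hw := prod_pow_smul_mem_powIdeal_smul (M := A) w k (m := _ * _)
      (by rwa [smul_eq_mul, Ideal.mul_top])
    refine ⟨n + k, ?_⟩
    rw [← Ideal.mul_top (powIdeal _ _), ← smul_eq_mul, powIdeal_cons_smul_top]
    refine Submodule.mem_sup.2 ⟨z ^ (n + k + 1) * (-a * (∏ i, w i) ^ (n + k)), ?_,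
      z ^ n * ((∏ i, w i) ^ k * (z ^ k * (1 + a * z) * (∏ i, w i) ^ n)), ?_, ?_⟩
    · exact Submodule.smul_mem_pointwise_smul _ _ _ trivial
    · rw [add_right_comm]
      exact Submodule.smul_mem _ (z ^ n) hw
    · rw [Fin.prod_univ_succ, Fin.cons_zero]
      simp only [Fin.cons_succ]
      ring

theorem limitClosure_eq_top_of_moduleDim_lt {R : Type u} [CommRing R] {M : Type*}
    [AddCommGroup M] [Module R M] (hM : moduleDim R M < t) (x : Fin t → R) :
    limitClosure (M := M) x = ⊤ := by
  obtain ⟨n, hn⟩ := exists_prod_pow_mem_powIdeal hM (Ideal.Quotient.mk _ ∘ x)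
  simp only [Function.comp_apply, ← map_prod, ← map_pow, ← map_powIdeal] at hn
  obtain ⟨s, hs, hsn⟩ := (Ideal.mem_map_iff_of_surjective _ Ideal.Quotient.mk_surjective).1 hn
  rw [Ideal.Quotient.eq, Module.mem_annihilator] at hsn
  refine Submodule.eq_top_iff'.2 fun m => mem_limitClosure_iff.2 ⟨n, ?_⟩
  rw [← sub_eq_zero.1 ((sub_smul _ _ _).symm.trans (hsn m))]
  exact Submodule.smul_mem_smul hs trivial

theorem mk_mem_limitClosure_iff_of_moduleDim_lt {R : Type u} [CommRing R] {U : Ideal R}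
    (hU : moduleDim R U < t) {x : Fin t → R} {r : R} :
    Ideal.Quotient.mk U r ∈ limitClosure (M := R ⧸ U) (Ideal.Quotient.mk U ∘ x) ↔
      r ∈ limitClosure (M := R) x := by
  have hquot (k : ℕ) : (∏ i, (Ideal.Quotient.mk U ∘ x) i) ^ k • Ideal.Quotient.mk U r ∈
      powIdeal (Ideal.Quotient.mk U ∘ x) (k + 1) • (⊤ : Ideal (R ⧸ U)) ↔
      ∃ s ∈ powIdeal x (k + 1), s - (∏ i, x i) ^ k * r ∈ U := by
    simp only [Function.comp_apply, ← map_prod, ← map_pow, ← map_powIdeal, smul_eq_mul, ← map_mul,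
      Ideal.mul_top, Ideal.mem_map_iff_of_surjective _ Ideal.Quotient.mk_surjective,
      Ideal.Quotient.eq]
  simp only [mem_limitClosure_iff, hquot]
  simp only [smul_eq_mul, Ideal.mul_top]
  refine ⟨?_, fun ⟨k, hk⟩ => ⟨k, _, hk, by simp⟩⟩
  rintro ⟨k, s, hs, hsu⟩
  have hu : (⟨_, hsu⟩ : U) ∈ limitClosure (x ^ (k + 1)) := by
    rw [limitClosure_eq_top_of_moduleDim_lt hU]
    trivial
  obtain ⟨n, hn⟩ := mem_limitClosure_iff.1 hu
  have hs' := prod_pow_smul_mem_powIdeal_smul (M := R) x ((k + 1) * n) (m := s)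
    (by rwa [smul_eq_mul, Ideal.mul_top])
  have hn' := map_mem_smul_top U.subtype hn
  rw [smul_eq_mul, Ideal.mul_top] at hs' hn'
  rw [powIdeal_pow, show (k + 1) * (n + 1) = k + 1 + (k + 1) * n by ring] at hn'
  simp only [map_smul, Submodule.subtype_apply, Pi.pow_apply, Finset.prod_pow, ← pow_mul] at hn'
  refine ⟨k + (k + 1) * n, ?_⟩
  rw [add_right_comm]
  convert Ideal.sub_mem _ hs' hn' using 1
  simp only [smul_eq_mul]
  ring

end LimitClosure

/-! ### Artinian modules -/

section Artinian

variable {R : Type*} [CommRing R]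

theorem exists_forall_ge_eq_of_antitone {α : Type*} [PartialOrder α] [WellFoundedLT α]
    {f : ℕ → ℕ → α} (hf : Antitone (Function.uncurry f)) : ∃ n, ∀ m ≥ n, f m = f n := by
  have hle {m n k l} (hmn : m ≤ n) (hkl : k ≤ l) : f n l ≤ f m k :=
    hf (show (m, k) ≤ (n, l) from ⟨hmn, hkl⟩)
  obtain ⟨i, hi⟩ := WellFoundedLT.antitone_chain_condition (f := fun n => f n n)
    fun _ _ h => hle h h
  have hdiag {m k} (hm : i ≤ m) (hk : i ≤ k) : f m k = f i i := by
    refine (hle hm hk).antisymm ?_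
    rw [hi (max m k) (le_max_of_le_left hm)]
    exact hle (le_max_left m k) (le_max_right m k)
  choose N hN using fun k => WellFoundedLT.antitone_chain_condition (f := fun n => f n k)
    fun _ _ h => hle h le_rfl
  refine ⟨max i ((Finset.range i).sup N), fun m hm => funext fun k => ?_⟩
  rcases lt_or_ge k i with hk | hk
  · have hNk : N k ≤ max i ((Finset.range i).sup N) :=
      le_max_of_le_right (Finset.le_sup (Finset.mem_range.2 hk))
    rw [← hN k m (hNk.trans hm), ← hN k _ hNk]
  · rw [hdiag ((le_max_left _ _).trans hm) hk, hdiag (le_max_left _ _) hk]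

section Melkersson

open scoped Pointwise

variable {C : Type*} [AddCommGroup C] [Module R C]

/-- The submodule `uᵏ X ∩ (0 : u)` of the kernel `(0 : u)` of multiplication by `u`. It records the
elements of `X` killed by `uᵏ⁺¹` modulo those killed by `uᵏ`. -/
def layer (u : R) (X : Submodule R C) (k : ℕ) : Submodule R (LinearMap.lsmul R C u).ker :=
  (u ^ k • X).comap (LinearMap.lsmul R C u).ker.subtype

theorem layer_antitone (u : R) {X Y : Submodule R C} (hXY : X ≤ Y) {k l : ℕ} (hkl : k ≤ l) :
    layer u X l ≤ layer u Y k := by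
  refine Submodule.comap_mono ?_
  rw [← Nat.sub_add_cancel hkl, add_comm, pow_add, mul_smul]
  exact smul_mono_right _ ((Submodule.smul_le_self_of_tower _ _).trans hXY)

theorem le_of_layer_le {u : R} (hu : ∀ c : C, ∃ k : ℕ, u ^ k • c = 0) {X Y : Submodule R C}
    (hXY : X ≤ Y) (hlayer : ∀ k, layer u Y k ≤ layer u X k) : Y ≤ X := by
  suffices h : ∀ (k : ℕ), ∀ c ∈ Y, u ^ k • c = 0 → c ∈ X from
    fun c hc => let ⟨k, hk⟩ := hu c; h k c hc hk
  intro k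
  induction k with
  | zero =>
    intro c _ hc
    rw [← one_smul R c, ← pow_zero u, hc]
    exact X.zero_mem
  | succ k ih =>
    intro c hc hck
    have hker : u ^ k • c ∈ (LinearMap.lsmul R C u).ker := by
      rwa [LinearMap.mem_ker, LinearMap.lsmul_apply, smul_smul, ← pow_succ']
    obtain ⟨b, hb, hbc⟩ := (Submodule.mem_smul_pointwise_iff_exists _ _ _).1
      (@hlayer k ⟨_, hker⟩ (Submodule.smul_mem_pointwise_smul _ _ _ hc))
    have hdiff := ih (c - b) (Y.sub_mem hc (hXY hb)) (by rw [smul_sub, hbc]; exact sub_self _)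
    exact sub_add_cancel c b ▸ X.add_mem hdiff hb

/-- Melkersson's criterion. -/
theorem isArtinian_of_isArtinian_ker_lsmul {u : R} (hu : ∀ c : C, ∃ k : ℕ, u ^ k • c = 0)
    [IsArtinian R (LinearMap.lsmul R C u).ker] : IsArtinian R C := by
  rw [← monotone_stabilizes_iff_artinian]
  intro X
  have hanti : Antitone (Function.uncurry fun n => layer u (OrderDual.ofDual (X n))) :=
    fun _ _ h => layer_antitone u (X.monotone h.1) h.2
  obtain ⟨n, hn⟩ := exists_forall_ge_eq_of_antitone hanti
  refine ⟨n, fun m hm => le_antisymm (X.monotone hm) ?_⟩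
  exact le_of_layer_le hu (X.monotone hm) fun k => (congrFun (hn m hm) k).ge

end Melkersson

section IsSmall

variable {I J : Ideal R} {C D E : Type*} [AddCommGroup C] [Module R C] [AddCommGroup D] [Module R D]
  [AddCommGroup E] [Module R E]

/-- A module is small with respect to `I` if it is Artinian and all its subquotients killed by `I`
have finite length. It suffices to consider the largest such quotient of each submodule. -/
structure IsSmall (I : Ideal R) (C : Type*) [AddCommGroup C] [Module R C] : Prop where
  isArtinian : IsArtinian R C
  isNoetherian (N : Submodule R C) : IsNoetherian R (N ⧸ I • (⊤ : Submodule R N))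

/-- The map `C / I C → D / I D` induced by `f`. -/
abbrev mapQuotSMulTop (I : Ideal R) (f : C →ₗ[R] D) :
    C ⧸ I • (⊤ : Submodule R C) →ₗ[R] D ⧸ I • (⊤ : Submodule R D) :=
  Submodule.mapQ _ _ f (Submodule.smul_top_le_comap_smul_top I f)

theorem isNoetherian_quotient_smul_top_of_surjective {f : C →ₗ[R] D} (hf : Function.Surjective f)
    (h : IsNoetherian R (C ⧸ I • (⊤ : Submodule R C))) :
    IsNoetherian R (D ⧸ I • (⊤ : Submodule R D)) := by
  refine isNoetherian_of_surjective (mapQuotSMulTop I f) (LinearMap.range_eq_top.2 fun d => ?_)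
  obtain ⟨d, rfl⟩ := Submodule.mkQ_surjective _ d
  obtain ⟨c, rfl⟩ := hf d
  exact ⟨Submodule.Quotient.mk c, rfl⟩

theorem isNoetherian_quotient_smul_top_of_exact {f : C →ₗ[R] D} {g : D →ₗ[R] E}
    (hfg : Function.Exact f g) (hg : Function.Surjective g)
    (hC : IsNoetherian R (C ⧸ I • (⊤ : Submodule R C)))
    (hE : IsNoetherian R (E ⧸ I • (⊤ : Submodule R E))) :
    IsNoetherian R (D ⧸ I • (⊤ : Submodule R D)) := by
  refine isNoetherian_of_range_eq_ker (mapQuotSMulTop I f) (mapQuotSMulTop I g) ?_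
  ext d
  obtain ⟨d, rfl⟩ := Submodule.mkQ_surjective _ d
  simp only [LinearMap.mem_range, LinearMap.mem_ker, Submodule.mkQ_apply, Submodule.mapQ_apply,
    Submodule.Quotient.mk_eq_zero]
  constructor
  · rintro ⟨c, hc⟩
    obtain ⟨c, rfl⟩ := Submodule.mkQ_surjective _ c
    rw [Submodule.mkQ_apply, Submodule.mapQ_apply, Submodule.Quotient.eq] at hc
    simpa [hfg.apply_apply_eq_zero] using map_mem_smul_top g hc
  · intro hd
    obtain ⟨s, hs, hsd⟩ := exists_mem_smul_top_of_surjective hg hd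
    obtain ⟨c, hc⟩ := (hfg (d - s)).1 (by rw [map_sub, hsd, sub_self])
    refine ⟨Submodule.Quotient.mk c, ?_⟩
    rwa [Submodule.mapQ_apply, hc, Submodule.Quotient.eq, sub_sub_cancel_left,
      Submodule.neg_mem_iff]

namespace IsSmall

theorem of_injective (h : IsSmall I D) {f : C →ₗ[R] D} (hf : Function.Injective f) :
    IsSmall I C where
  isArtinian := have := h.isArtinian; isArtinian_of_injective f hf
  isNoetherian N := isNoetherian_quotient_smul_top_of_surjective
    (N.equivMapOfInjective f hf).symm.surjective (h.isNoetherian _)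

theorem of_surjective (h : IsSmall I C) {f : C →ₗ[R] D} (hf : Function.Surjective f) :
    IsSmall I D where
  isArtinian := have := h.isArtinian; isArtinian_of_surjective C f hf
  isNoetherian N := by
    refine isNoetherian_quotient_smul_top_of_surjective
      (f := f.restrict fun _ => id) ?_ (h.isNoetherian (N.comap f))
    rintro ⟨n, hn⟩
    obtain ⟨c, rfl⟩ := hf n
    exact ⟨⟨c, hn⟩, rfl⟩

theorem of_exact (hC : IsSmall I C) (hE : IsSmall I E) {f : C →ₗ[R] D} {g : D →ₗ[R] E}
    (hfg : Function.Exact f g) : IsSmall I D where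
  isArtinian := by
    have := hC.isArtinian
    have := hE.isArtinian
    exact isArtinian_of_range_eq_ker f g hfg.linearMap_ker_eq.symm
  isNoetherian N := by
    refine isNoetherian_quotient_smul_top_of_exact
      (f := f.restrict (p := N.comap f) fun _ => id) (g := g.submoduleMap N) ?_
      (g.submoduleMap_surjective N) (hC.isNoetherian _) (hE.isNoetherian _)
    rintro ⟨d, hd⟩
    rw [← Submodule.coe_eq_zero]
    refine (hfg d).trans ⟨?_, ?_⟩
    · rintro ⟨c, rfl⟩
      exact ⟨⟨c, hd⟩, rfl⟩
    · rintro ⟨c, hc⟩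
      exact ⟨c, congrArg Subtype.val hc⟩

theorem ker_pow {f : Module.End R C} (h : IsSmall I f.ker) (n : ℕ) : IsSmall I (f ^ n).ker := by
  induction n with
  | zero =>
    refine h.of_injective (f := 0) fun a b _ => ?_
    have (c : (f ^ 0).ker) : c = 0 := Subtype.ext (by simpa using c.2)
    rw [this a, this b]
  | succ n ih =>
    have hle : f.ker ≤ (f ^ (n + 1)).ker := fun c hc => by
      rw [LinearMap.mem_ker] at hc ⊢
      rw [pow_succ, Module.End.mul_apply, hc, map_zero]
    refine h.of_exact ih (f := Submodule.inclusion hle)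
      (g := f.restrict fun c hc => ?_) fun c => ⟨fun hc => ?_, ?_⟩
    · rwa [LinearMap.mem_ker, pow_succ, Module.End.mul_apply] at hc
    · exact ⟨⟨c, congrArg Subtype.val hc⟩, rfl⟩
    · rintro ⟨c, rfl⟩
      exact Subtype.ext c.2

theorem isNoetherian_of_smul_eq_zero (h : IsSmall I C) (hI : ∀ r ∈ I, ∀ c : C, r • c = 0) :
    IsNoetherian R C := by
  have hbot : I • (⊤ : Submodule R (⊤ : Submodule R C)) = ⊥ := by
    rw [eq_bot_iff, Submodule.smul_le]
    rintro r hr ⟨c, -⟩ -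
    exact Subtype.ext (hI r hr c)
  have := h.isNoetherian ⊤
  exact isNoetherian_of_linearEquiv
    (Submodule.quotEquivOfEqBot _ hbot ≪≫ₗ Submodule.topEquiv)

theorem of_ker_lsmul [IsArtinian R C] {z : R} (hz : z ∈ I) (hJI : J ≤ I)
    (h : IsSmall J (LinearMap.lsmul R C z).ker) : IsSmall I C where
  isArtinian := inferInstance
  isNoetherian N := by
    have hN : IsSmall J (LinearMap.lsmul R N z).ker := by
      refine h.of_injective (f := N.subtype.restrict fun c hc => ?_) fun a b hab => ?_
      · exact congrArg Subtype.val hc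
      · exact Subtype.ext (Subtype.ext (congrArg Subtype.val hab :))
    -- `N = (0 :_N zᵏ) + zᵏ N` for large `k` because `N` is Artinian.
    obtain ⟨k, hk, hk0⟩ := ((LinearMap.eventually_codisjoint_ker_pow_range_pow
      (LinearMap.lsmul R N z)).and (Filter.eventually_ge_atTop 1)).exists
    have hsurj : Function.Surjective
        ((I • (⊤ : Submodule R N)).mkQ ∘ₗ (LinearMap.lsmul R N z ^ k).ker.subtype) := by
      intro c
      obtain ⟨c, rfl⟩ := Submodule.mkQ_surjective _ c
      obtain ⟨a, ha, b, ⟨b, rfl⟩, rfl⟩ :=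
        Submodule.mem_sup.1 (hk.eq_top ▸ Submodule.mem_top : c ∈ _)
      have hb : (LinearMap.lsmul R N z ^ k) b ∈ I • (⊤ : Submodule R N) := by
        rw [← Nat.sub_add_cancel hk0, pow_succ', Module.End.mul_apply]
        exact Submodule.smul_mem_smul hz Submodule.mem_top
      exact ⟨⟨a, ha⟩, (Submodule.Quotient.eq _).2 (by simpa using hb)⟩
    refine ((hN.ker_pow k).of_surjective hsurj).isNoetherian_of_smul_eq_zero fun r hr c => ?_
    obtain ⟨c, rfl⟩ := Submodule.mkQ_surjective _ c
    exact (Submodule.Quotient.mk_eq_zero _).2 (Submodule.smul_mem_smul (hJI hr) Submodule.mem_top)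

end IsSmall

end IsSmall

end Artinian

/-! ### Smallness of the top local cohomology module -/

section IsSmall

open scoped Pointwise

theorem isSMulRegular_quotient_torsion'_powers {R : Type*} [CommRing R] {M : Type*}
    [AddCommGroup M] [Module R M] (z : R) :
    IsSMulRegular (M ⧸ Submodule.torsion' R M (Submonoid.powers z)) z := by
  refine (isSMulRegular_quotient_iff_mem_of_smul_mem _ _).2 fun m hm => ?_
  obtain ⟨i, hi⟩ := mem_torsion'_powers.1 hm
  exact mem_torsion'_powers.2 ⟨i + 1, by rw [pow_succ, mul_smul, hi]⟩

namespace FirstLocalCohomology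

variable {R : Type*} [CommRing R] {L : Type*} [AddCommGroup L] [Module R L] (z : R)

theorem exists_pow_smul_eq_zero (q : FirstLocalCohomology z L) : ∃ k : ℕ, z ^ k • q = 0 := by
  obtain ⟨k, l, rfl⟩ := exists_mk_eq z q
  exact ⟨k, by rw [← map_smul, mk_eq_zero_iff]; exact ⟨0, l, by simp⟩⟩

/-- The map `ℓ ↦ [ℓ / zʲ]` from `L / zʲ L` to the cokernel of `L → L_z`. -/
noncomputable def ofQuotSMulTop (j : ℕ) : QuotSMulTop (z ^ j) L →ₗ[R] FirstLocalCohomology z L :=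
  Submodule.liftQ _ (mk z j) fun l hl => by
    obtain ⟨l, -, rfl⟩ := (Submodule.mem_smul_pointwise_iff_exists _ _ _).1 hl
    exact mk_eq_zero_iff.2 ⟨0, l, by simp⟩

theorem range_ofQuotSMulTop_one :
    (ofQuotSMulTop z 1 : _ →ₗ[R] FirstLocalCohomology z L).range =
      (LinearMap.lsmul R (FirstLocalCohomology z L) z).ker := by
  rw [ofQuotSMulTop, Submodule.range_liftQ]
  ext q
  rw [LinearMap.mem_range, LinearMap.mem_ker, LinearMap.lsmul_apply]
  constructor
  · rintro ⟨l, rfl⟩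
    rw [← map_smul, mk_eq_zero_iff]
    exact ⟨0, l, by simp⟩
  · intro hq
    obtain ⟨k, l, rfl⟩ : ∃ k l, mk z (k + 1) l = q :=
      let ⟨k, l, hl⟩ := exists_mk_eq z q
      ⟨k, z ^ 1 • l, by rw [mk_add_smul, hl]⟩
    have hl : mk z k l = 0 := by rw [← mk_add_smul z k 1, pow_one, map_smul, hq]
    obtain ⟨i, l', hl'⟩ := mk_eq_zero_iff.1 hl
    refine ⟨l', ?_⟩
    rw [← mk_add_smul z 1 (i + k) l', ← hl', show 1 + (i + k) = (k + 1) + i by ring, mk_add_smul]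

end FirstLocalCohomology

theorem IsTopLocalCohomology.comp_mkQ_torsion'_powers {R : Type*} [CommRing R] {M H : Type*}
    [AddCommGroup M] [Module R M] [AddCommGroup H] [Module R H] {t : ℕ} {z : R} {w : Fin t → R}
    {φ : ℕ → M ⧸ Submodule.torsion' R M (Submonoid.powers z) →ₗ[R] H}
    (h : IsTopLocalCohomology (Fin.cons z w : Fin (t + 1) → R) φ) :
    IsTopLocalCohomology (Fin.cons z w : Fin (t + 1) → R) fun n => φ n ∘ₗ Submodule.mkQ _ := by
  refine h.comp_of_surjective (Submodule.mkQ_surjective _) fun m hm => ?_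
  rw [Submodule.mkQ_apply, Submodule.Quotient.mk_eq_zero, mem_torsion'_powers] at hm
  obtain ⟨k, hk⟩ := hm
  refine ⟨k, ?_⟩
  rw [Fin.prod_univ_succ, Fin.cons_zero, mul_pow, mul_comm, mul_smul, hk, smul_zero]

section

variable {R : Type u} [CommRing R] [IsNoetherianRing R]

theorem isArtinian_of_supportDim_le_zero {M : Type*} [AddCommGroup M] [Module R M]
    [Module.Finite R M] (hdim : Module.supportDim R M ≤ 0) : IsArtinian R M := by
  let I := Module.annihilator R M
  have hk : Ring.KrullDimLE 0 (R ⧸ I) := Ring.krullDimLE_iff.2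
    (by simpa [Module.supportDim_eq_ringKrullDim_quotient_annihilator] using hdim)
  have : IsArtinianRing (R ⧸ I) := isArtinianRing_iff_krullDimLE_zero.2 hk
  let _ : Module (R ⧸ I) M := Module.IsTorsionBySet.module (I := I)
    fun m a => Module.mem_annihilator.1 a.2 m
  have : IsScalarTower R (R ⧸ I) M := Module.IsTorsionBySet.isScalarTower _
  have : Module.Finite (R ⧸ I) M := Module.Finite.of_restrictScalars_finite R (R ⧸ I) M
  have h : IsArtinian (R ⧸ I) M := isArtinian_of_fg_of_artinian'
  exact isArtinian_of_surjective_algebraMap (S := R) (R := R ⧸ I) Ideal.Quotient.mk_surjective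

variable [IsLocalRing R]

theorem supportDim_quotSMulTop_quotient_torsion'_le {M : Type u} [AddCommGroup M] [Module R M]
    [Module.Finite R M] {z : R} (hz : z ∈ maximalIdeal R) {s : ℕ}
    (hdim : Module.supportDim R M ≤ (s + 1 : ℕ)) :
    Module.supportDim R
      (QuotSMulTop z (M ⧸ Submodule.torsion' R M (Submonoid.powers z))) ≤ s := by
  have hsucc := Module.supportDim_quotSMulTop_succ_eq_supportDim
    (isSMulRegular_quotient_torsion'_powers (M := M) z) hz
  have hle := Module.supportDim_le_of_surjective
    (Submodule.torsion' R M (Submonoid.powers z)).mkQ (Submodule.mkQ_surjective _)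
  have h := (hsucc.trans_le hle).trans hdim
  push_cast at h
  exact ENat.WithBot.add_le_add_one_right_iff.1 h

theorem IsTopLocalCohomology.isSmall {s : ℕ} {y : Fin s → R} (hy : ∀ i, y i ∈ maximalIdeal R)
    {M H : Type u} [AddCommGroup M] [Module R M] [Module.Finite R M] [AddCommGroup H] [Module R H]
    {φ : ℕ → M →ₗ[R] H} (h : IsTopLocalCohomology y φ) (hdim : Module.supportDim R M ≤ s) :
    IsSmall (Ideal.span (Set.range y)) H := by
  induction s generalizing M H with
  | zero =>
    have hM : IsSmall (Ideal.span (Set.range y)) M :=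
      ⟨isArtinian_of_supportDim_le_zero (by simpa using hdim), fun _ => inferInstance⟩
    obtain ⟨f, -⟩ := h.exists_linearEquiv (.of_isEmpty y)
    exact hM.of_injective f.injective
  | succ s ih =>
    obtain ⟨z, w, rfl⟩ : ∃ z w, y = Fin.cons z w := ⟨y 0, Fin.tail y, by simp⟩
    have hz : z ∈ maximalIdeal R := by simpa using hy 0
    obtain ⟨L, _, _, ψ, hψ⟩ :=
      exists_isTopLocalCohomology w (M ⧸ Submodule.torsion' R M (Submonoid.powers z))
    have hquot := ih (fun i => by simpa using hy i.succ) (hψ.quotSMulTop z)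
      (supportDim_quotSMulTop_quotient_torsion'_le hz hdim)
    have hker : IsSmall (Ideal.span (Set.range w))
        (LinearMap.lsmul R (FirstLocalCohomology z L) z).ker := by
      rw [← FirstLocalCohomology.range_ofQuotSMulTop_one]
      exact (pow_one z ▸ hquot).of_surjective (LinearMap.surjective_rangeRestrict _)
    have := hker.isArtinian
    have := isArtinian_of_isArtinian_ker_lsmul
      (FirstLocalCohomology.exists_pow_smul_eq_zero (L := L) z)
    have hsmall : IsSmall (Ideal.span (Set.range (Fin.cons z w : Fin (s + 1) → R)))
        (FirstLocalCohomology z L) := by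
      refine .of_ker_lsmul ?_ ?_ hker
      · exact Ideal.subset_span ⟨0, rfl⟩
      · exact Ideal.span_mono (Set.range_subset_iff.2 fun i => ⟨i.succ, rfl⟩)
    obtain ⟨f, -⟩ := h.exists_linearEquiv (hψ.cons z).comp_mkQ_torsion'_powers
    exact hsmall.of_injective f.injective

end

end IsSmall

/-! ### Differential modules -/

theorem isArtinian_of_surjective_of_ker_le {R : Type*} [CommRing R] {Y A B : Type*}
    [AddCommGroup Y] [Module R Y] [AddCommGroup A] [Module R A] [AddCommGroup B] [Module R B]
    [IsArtinian R A] {α : Y →ₗ[R] A} {β : Y →ₗ[R] B} (hβ : Function.Surjective β)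
    (h : α.ker ≤ β.ker) : IsArtinian R B := by
  have : IsArtinian R (Y ⧸ α.ker) := isArtinian_of_linearEquiv α.quotKerEquivRange.symm
  exact isArtinian_of_surjective _ (α.ker.liftQ β h) fun b =>
    let ⟨y, hy⟩ := hβ b
    ⟨Submodule.Quotient.mk y, hy⟩

/-- A differential module: a module with an endomorphism `d` such that `d² = 0`. It serves as an
ungraded chain complex, the total complex being all that is needed of the Čech complex below. -/
structure DifferentialModule (R : Type u) [CommRing R] where
  carrier : Type u
  [addCommGroup : AddCommGroup carrier]
  [module : Module R carrier]
  d : carrier →ₗ[R] carrier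
  d_d : ∀ n, d (d n) = 0

attribute [instance] DifferentialModule.addCommGroup DifferentialModule.module

namespace DifferentialModule

variable {R : Type u} [CommRing R]

/-- The homology `ker d / range d` of a differential module. -/
abbrev homology (N : DifferentialModule R) : Type u :=
  N.d.ker ⧸ N.d.range.submoduleOf N.d.ker

theorem homology_mk_eq_zero_iff {N : DifferentialModule R} {c : N.d.ker} :
    (Submodule.Quotient.mk c : N.homology) = 0 ↔ ∃ e, N.d e = c := by
  rw [Submodule.Quotient.mk_eq_zero]
  rfl

/-- The map on homology induced by a linear map commuting with the differentials. -/
noncomputable def homologyMap {A B : DifferentialModule R} (f : A.carrier →ₗ[R] B.carrier)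
    (hf : ∀ a, B.d (f a) = f (A.d a)) : A.homology →ₗ[R] B.homology :=
  Submodule.mapQ _ _ (f.restrict fun a ha => by simp_all) fun a ⟨e, he⟩ =>
    ⟨f e, (hf e).trans (congrArg f he)⟩

section ShortExact

variable {A B C : DifferentialModule R} {f : A.carrier →ₗ[R] B.carrier}
  {g : B.carrier →ₗ[R] C.carrier}

theorem exact_homologyMap (hf : ∀ a, B.d (f a) = f (A.d a)) (hg : ∀ b, C.d (g b) = g (B.d b))
    (hinj : Function.Injective f) (hsurj : Function.Surjective g) (hex : Function.Exact f g) :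
    Function.Exact (homologyMap f hf) (homologyMap g hg) := by
  intro q
  obtain ⟨⟨b, hb⟩, rfl⟩ := Submodule.Quotient.mk_surjective _ q
  rw [LinearMap.mem_ker] at hb
  constructor
  · intro h
    obtain ⟨c, hc⟩ := homology_mk_eq_zero_iff.1 h
    obtain ⟨b', rfl⟩ := hsurj c
    obtain ⟨a, ha⟩ := (hex (b - B.d b')).1 (by rw [map_sub, ← hg, hc]; exact sub_self _)
    have hda : A.d a = 0 := hinj (by rw [← hf, ha, map_sub, hb, B.d_d, map_zero, sub_zero])
    refine ⟨Submodule.Quotient.mk ⟨a, hda⟩, (Submodule.Quotient.eq _).2 ⟨-b', ?_⟩⟩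
    change B.d (-b') = f a - b
    rw [ha, map_neg]
    abel
  · rintro ⟨a, h⟩
    obtain ⟨a, rfl⟩ := Submodule.Quotient.mk_surjective _ a
    rw [← h]
    exact homology_mk_eq_zero_iff.2 ⟨0, by simp [hex.apply_apply_eq_zero]⟩

theorem isArtinian_homology_of_exact (hf : ∀ a, B.d (f a) = f (A.d a))
    (hg : ∀ b, C.d (g b) = g (B.d b)) (hinj : Function.Injective f)
    (hsurj : Function.Surjective g) (hex : Function.Exact f g) [IsArtinian R A.homology]
    [IsArtinian R C.homology] : IsArtinian R B.homology :=
  isArtinian_of_range_eq_ker _ _ (exact_homologyMap hf hg hinj hsurj hex).linearMap_ker_eq.symm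

/-- The connecting homomorphism maps the homology of `C` onto this kernel; to avoid choices, both
are compared with the module of pairs `(a, b)` such that `f a = d b`. -/
theorem isArtinian_ker_homologyMap (hf : ∀ a, B.d (f a) = f (A.d a))
    (hg : ∀ b, C.d (g b) = g (B.d b)) (hinj : Function.Injective f)
    (hsurj : Function.Surjective g) (hex : Function.Exact f g) [IsArtinian R C.homology] :
    IsArtinian R (homologyMap f hf).ker := by
  let Y := LinearMap.eqLocus (f ∘ₗ LinearMap.fst R A.carrier B.carrier)
    (B.d ∘ₗ LinearMap.snd R A.carrier B.carrier)
  have hY (y : Y) : f y.1.1 = B.d y.1.2 := y.2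
  have hC (y : Y) : C.d (g y.1.2) = 0 := by rw [hg, ← hY, hex.apply_apply_eq_zero]
  have hA (y : Y) : A.d y.1.1 = 0 := hinj (by rw [← hf, hY, B.d_d, map_zero])
  let α : Y →ₗ[R] C.homology :=
    Submodule.mkQ _ ∘ₗ (g ∘ₗ LinearMap.snd R _ _ ∘ₗ Y.subtype).codRestrict C.d.ker hC
  let β : Y →ₗ[R] (homologyMap f hf).ker := LinearMap.codRestrict _
    (Submodule.mkQ _ ∘ₗ (LinearMap.fst R _ _ ∘ₗ Y.subtype).codRestrict A.d.ker hA)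
    fun y => homology_mk_eq_zero_iff.2 ⟨y.1.2, (hY y).symm⟩
  refine isArtinian_of_surjective_of_ker_le (α := α) (β := β) ?_ fun y hy => ?_
  · rintro ⟨q, hq⟩
    obtain ⟨a, rfl⟩ := Submodule.Quotient.mk_surjective _ q
    obtain ⟨b, hb⟩ := homology_mk_eq_zero_iff.1 hq
    exact ⟨⟨(a, b), hb.symm⟩, rfl⟩
  · obtain ⟨e, he⟩ := homology_mk_eq_zero_iff.1 hy
    obtain ⟨b, rfl⟩ := hsurj e
    obtain ⟨a, ha⟩ := (hex (y.1.2 - B.d b)).1 (by rw [map_sub, ← hg, he]; exact sub_self _)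
    refine Subtype.ext (homology_mk_eq_zero_iff.2 ⟨a, hinj ?_⟩)
    change f (A.d a) = f y.1.1
    rw [hY, ← hf, ha, map_sub, B.d_d, sub_zero]

end ShortExact

end DifferentialModule

/-! ### Čech complexes -/

section LocalizationAwayMap

variable {R : Type*} [CommRing R] {M N P : Type*} [AddCommGroup M] [Module R M] [AddCommGroup N]
  [Module R N] [AddCommGroup P] [Module R P]

/-- The map `M_z → N_z` induced by `f : M → N`. -/
noncomputable def localizationAwayMap (z : R) (f : M →ₗ[R] N) :
    LocalizationAway z M →ₗ[R] LocalizationAway z N :=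
  IsLocalizedModule.map (Submonoid.powers z) (LocalizedModule.mkLinearMap _ M)
    (LocalizedModule.mkLinearMap _ N) f

@[simp]
theorem localizationAwayMap_divPow (z : R) (f : M →ₗ[R] N) (k : ℕ) (m : M) :
    localizationAwayMap z f (divPow z k m) = divPow z k (f m) := by
  rw [divPow_apply, divPow_apply]
  exact IsLocalizedModule.map_LocalizedModules _ f m _

theorem localizationAwayMap_injective (z : R) {f : M →ₗ[R] N} (hf : Function.Injective f) :
    Function.Injective (localizationAwayMap z f) :=
  IsLocalizedModule.map_injective _ _ _ f hf

theorem localizationAwayMap_surjective (z : R) {f : M →ₗ[R] N} (hf : Function.Surjective f) :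
    Function.Surjective (localizationAwayMap z f) :=
  IsLocalizedModule.map_surjective _ _ _ f hf

theorem localizationAwayMap_exact (z : R) {f : M →ₗ[R] N} {g : N →ₗ[R] P}
    (h : Function.Exact f g) :
    Function.Exact (localizationAwayMap z f) (localizationAwayMap z g) :=
  IsLocalizedModule.map_exact _ _ _ _ f g h

end LocalizationAwayMap

section Cech

variable {R : Type u} [CommRing R]

/-- The mapping cone (up to a shift and signs) of the localization map `N → N_z`, with
differential `(n, ν) ↦ (d n, n / 1 - d ν)`. -/
noncomputable def DifferentialModule.cone (z : R) (N : DifferentialModule R) :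
    DifferentialModule R where
  carrier := N.carrier × LocalizationAway z N.carrier
  d := (N.d ∘ₗ LinearMap.fst R _ _).prod
    (divPow z 0 ∘ₗ LinearMap.fst R _ _ - localizationAwayMap z N.d ∘ₗ LinearMap.snd R _ _)
  d_d := by
    rintro ⟨n, ν⟩
    obtain ⟨k, m, rfl⟩ := exists_divPow_eq z ν
    simp [N.d_d]

theorem DifferentialModule.cone_d_divPow (z : R) (N : DifferentialModule R) (n : N.carrier)
    (k : ℕ) (m : N.carrier) :
    (N.cone z).d (n, divPow z k m) = (N.d n, divPow z 0 n - divPow z k (N.d m)) :=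
  Prod.ext rfl (congrArg (_ - ·) (localizationAwayMap_divPow z N.d k m))

/-- The total Čech complex of `M` with respect to the sequence `w`. -/
noncomputable def cech {t : ℕ} (w : Fin t → R) (M : Type u) [AddCommGroup M] [Module R M] :
    DifferentialModule R :=
  match t, w with
  | 0, _ => { carrier := M, d := 0, d_d := fun _ => rfl }
  | _ + 1, w => (cech (Fin.tail w) M).cone (w 0)

variable {M N P : Type u} [AddCommGroup M] [Module R M] [AddCommGroup N] [Module R N]
  [AddCommGroup P] [Module R P]

/-- The map of Čech complexes induced by a homomorphism of modules. -/
noncomputable def cechMap {t : ℕ} (w : Fin t → R) (f : M →ₗ[R] N) :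
    (cech w M).carrier →ₗ[R] (cech w N).carrier :=
  match t, w with
  | 0, _ => f
  | _ + 1, w => (cechMap (Fin.tail w) f).prodMap
      (localizationAwayMap (w 0) (cechMap (Fin.tail w) f))

variable {t : ℕ} (w : Fin t → R)

theorem cech_d_cechMap (f : M →ₗ[R] N) (c : (cech w M).carrier) :
    (cech w N).d (cechMap w f c) = cechMap w f ((cech w M).d c) := by
  induction t with
  | zero => exact (map_zero f).symm
  | succ t ih =>
    obtain ⟨n, ν⟩ := c
    obtain ⟨k, m, rfl⟩ := exists_divPow_eq (w 0) ν
    refine Prod.ext (ih _ _) ?_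
    change divPow (w 0) 0 (cechMap (Fin.tail w) f n) - localizationAwayMap (w 0) _
        (localizationAwayMap (w 0) _ (divPow (w 0) k m)) =
      localizationAwayMap (w 0) _ (divPow (w 0) 0 n - localizationAwayMap (w 0) _ (divPow _ k m))
    simp [ih]

theorem cechMap_injective {f : M →ₗ[R] N} (hf : Function.Injective f) :
    Function.Injective (cechMap w f) := by
  induction t with
  | zero => exact hf
  | succ t ih => exact (ih _).prodMap (localizationAwayMap_injective _ (ih _))

theorem cechMap_surjective {f : M →ₗ[R] N} (hf : Function.Surjective f) :
    Function.Surjective (cechMap w f) := by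
  induction t with
  | zero => exact hf
  | succ t ih => exact (ih _).prodMap (localizationAwayMap_surjective _ (ih _))

theorem cechMap_exact {f : M →ₗ[R] N} {g : N →ₗ[R] P} (h : Function.Exact f g) :
    Function.Exact (cechMap w f) (cechMap w g) := by
  induction t with
  | zero => exact h
  | succ t ih =>
    rintro ⟨n, ν⟩
    have hn := ih (Fin.tail w) n
    have hν := localizationAwayMap_exact (w 0) (ih (Fin.tail w)) ν
    refine Prod.ext_iff.trans ((and_congr hn hν).trans ⟨?_, ?_⟩)
    · rintro ⟨⟨n', hn'⟩, ⟨ν', hν'⟩⟩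
      exact ⟨(n', ν'), Prod.ext hn' hν'⟩
    · rintro ⟨⟨n', ν'⟩, e⟩
      exact ⟨⟨n', congrArg Prod.fst e⟩, ⟨ν', congrArg Prod.snd e⟩⟩

theorem cechMap_lsmul (u : R) (c : (cech w M).carrier) :
    cechMap w (LinearMap.lsmul R M u) c = u • c := by
  induction t with
  | zero => rfl
  | succ t ih =>
    obtain ⟨n, ν⟩ := c
    obtain ⟨k, m, rfl⟩ := exists_divPow_eq (w 0) ν
    refine Prod.ext (ih _ _) ?_
    change localizationAwayMap (w 0) _ (divPow (w 0) k m) = u • divPow (w 0) k m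
    rw [localizationAwayMap_divPow, ih, map_smul]

theorem cech_smul_eq_zero {u : R} (hu : ∀ m : M, u • m = 0) (c : (cech w M).carrier) :
    u • c = 0 := by
  have hu' : LinearMap.lsmul R M u = LinearMap.lsmul R M 0 := LinearMap.ext fun m => by simp [hu]
  rw [← cechMap_lsmul, hu', cechMap_lsmul, zero_smul]

end Cech

/-! ### Artinian homology of Čech complexes -/

section CechArtinian

open DifferentialModule

variable {R : Type u} [CommRing R]

theorem DifferentialModule.exists_cone_d_eq_pow_smul {z : R} {N : DifferentialModule R}
    {c : (N.cone z).carrier} (hc : (N.cone z).d c = 0) :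
    ∃ k e, (N.cone z).d e = z ^ k • c := by
  obtain ⟨n, ν⟩ := c
  obtain ⟨k, m, rfl⟩ := exists_divPow_eq z ν
  rw [cone_d_divPow, ← divPow_pow_smul z k n, ← map_sub] at hc
  obtain ⟨i, hi⟩ := mem_torsion'_powers.1 (divPow_eq_zero_iff.1 (congrArg Prod.snd hc))
  rw [smul_sub, sub_eq_zero, smul_smul, ← pow_add] at hi
  refine ⟨i + k, (z ^ i • m, divPow z 0 0), ?_⟩
  rw [cone_d_divPow]
  refine Prod.ext ?_ ?_
  · exact (map_smul N.d _ m).trans hi.symm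
  · change divPow z 0 (z ^ i • m) - divPow z 0 (N.d 0) = z ^ (i + k) • divPow z k m
    rw [map_zero, map_zero, sub_zero, map_smul, ← divPow_pow_smul z k m, map_smul, smul_smul,
      pow_add]

theorem DifferentialModule.exists_cone_d_eq_pow_smul_of_forall {z : R} {N : DifferentialModule R}
    (hN : ∀ n, N.d n = 0 → ∃ k e, N.d e = z ^ k • n) {v : R} {c : (N.cone v).carrier}
    (hc : (N.cone v).d c = 0) : ∃ k e, (N.cone v).d e = z ^ k • c := by
  obtain ⟨n, ν⟩ := c
  obtain ⟨p, m, rfl⟩ := exists_divPow_eq v ν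
  rw [cone_d_divPow] at hc
  obtain ⟨k, a, ha⟩ := hN n (congrArg Prod.fst hc)
  have hzero : divPow v p (N.d (z ^ k • m - v ^ p • a)) = 0 := by
    have hν : divPow v p (N.d m) = divPow v 0 n := (sub_eq_zero.1 (congrArg Prod.snd hc)).symm
    rw [map_sub, map_smul, map_smul, ha, map_sub, map_smul, hν, divPow_pow_smul, map_smul,
      sub_self]
  obtain ⟨i, hi⟩ := mem_torsion'_powers.1 (divPow_eq_zero_iff.1 hzero)
  obtain ⟨l, b, hb⟩ := hN _ ((map_smul N.d _ _).trans hi)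
  refine ⟨l + k, (z ^ l • a, divPow v (p + i) (-b)), ?_⟩
  rw [cone_d_divPow]
  refine Prod.ext ?_ ?_
  · change N.d (z ^ l • a) = z ^ (l + k) • n
    rw [map_smul, ha, smul_smul, pow_add]
  · change divPow v 0 (z ^ l • a) - divPow v (p + i) (N.d (-b)) = z ^ (l + k) • divPow v p m
    rw [map_neg, hb, smul_comm, ← smul_neg, divPow_add_smul, ← divPow_pow_smul v p,
      ← map_sub, ← map_smul]
    congr 1
    module

theorem exists_cech_d_eq_pow_smul {t : ℕ} (w : Fin t → R) (i : Fin t) {M : Type u}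
    [AddCommGroup M] [Module R M] {c : (cech w M).carrier} (hc : (cech w M).d c = 0) :
    ∃ k e, (cech w M).d e = w i ^ k • c := by
  induction t with
  | zero => exact i.elim0
  | succ t ih =>
    cases i using Fin.cases with
    | zero => exact exists_cone_d_eq_pow_smul hc
    | succ i => exact exists_cone_d_eq_pow_smul_of_forall (fun _ => ih (Fin.tail w) i) hc

theorem exists_pow_smul_homology_cech_eq_zero {t : ℕ} (w : Fin t → R) {M : Type u}
    [AddCommGroup M] [Module R M] {u : R}
    (hu : u ∈ (Ideal.span (Set.range w) ⊔ Module.annihilator R M).radical)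
    (q : (cech w M).homology) : ∃ k : ℕ, u ^ k • q = 0 := by
  obtain ⟨c, rfl⟩ := Submodule.Quotient.mk_surjective _ q
  have hle : Ideal.span (Set.range w) ⊔ Module.annihilator R M ≤
      Ideal.radical ((cech w M).d.range.comap (LinearMap.toSpanSingleton R _ c.1)) := by
    refine sup_le (Ideal.span_le.2 ?_) fun a ha => Ideal.le_radical ?_
    · rintro _ ⟨i, rfl⟩
      exact exists_cech_d_eq_pow_smul w i c.2
    · exact ⟨0, (map_zero _).trans (cech_smul_eq_zero w (Module.mem_annihilator.1 ha) c.1).symm⟩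
  obtain ⟨k, e, he⟩ := Ideal.radical_le_radical_iff.2 hle hu
  exact ⟨k, homology_mk_eq_zero_iff.2 ⟨e, he⟩⟩

theorem isArtinian_cech {t : ℕ} {w : Fin t → R} {M : Type u} [AddCommGroup M] [Module R M]
    [IsArtinian R M] (hw : ∀ i (m : M), w i • m = 0) : IsArtinian R (cech w M).carrier := by
  induction t with
  | zero => exact ‹IsArtinian R M›
  | succ t ih =>
    have : Subsingleton (LocalizationAway (w 0) (cech (Fin.tail w) M).carrier) := by
      refine subsingleton_of_forall_eq 0 fun a => ?_
      obtain ⟨k, m, rfl⟩ := exists_divPow_eq (w 0) a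
      rw [divPow_eq_zero_iff, mem_torsion'_powers]
      exact ⟨1, by rw [pow_one, cech_smul_eq_zero _ (hw 0)]⟩
    have : IsArtinian R (cech (Fin.tail w) M).carrier := ih fun i => hw i.succ
    exact inferInstanceAs (IsArtinian R
      ((cech (Fin.tail w) M).carrier × LocalizationAway (w 0) (cech (Fin.tail w) M).carrier))

section Exact

variable {t : ℕ} (w : Fin t → R) {M N P : Type u} [AddCommGroup M] [Module R M] [AddCommGroup N]
  [Module R N] [AddCommGroup P] [Module R P]

theorem isArtinian_homology_cech_of_exact {f : M →ₗ[R] N} {g : N →ₗ[R] P}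
    (hf : Function.Injective f) (hg : Function.Surjective g) (h : Function.Exact f g)
    [IsArtinian R (cech w M).homology] [IsArtinian R (cech w P).homology] :
    IsArtinian R (cech w N).homology :=
  isArtinian_homology_of_exact (cech_d_cechMap w f) (cech_d_cechMap w g) (cechMap_injective w hf)
    (cechMap_surjective w hg) (cechMap_exact w h)

theorem isArtinian_homology_cech_of_linearEquiv (e : M ≃ₗ[R] N)
    [IsArtinian R (cech w M).homology] : IsArtinian R (cech w N).homology := by
  have : IsArtinian R (cech w PUnit.{u + 1}).carrier := isArtinian_cech fun _ _ => rfl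
  refine isArtinian_homology_cech_of_exact w (g := (0 : N →ₗ[R] PUnit.{u + 1})) e.injective
    (fun _ => ⟨0, Subsingleton.elim _ _⟩) fun n => ?_
  exact ⟨fun _ => e.surjective n, fun _ => rfl⟩

open scoped Pointwise in
theorem isArtinian_ker_lsmul_homology_cech {u : R} (hu : IsSMulRegular M u)
    [IsArtinian R (cech w (QuotSMulTop u M)).homology] :
    IsArtinian R (LinearMap.lsmul R (cech w M).homology u).ker := by
  have hmap : LinearMap.lsmul R (cech w M).homology u =
      homologyMap (cechMap w (LinearMap.lsmul R M u)) (cech_d_cechMap w _) := by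
    ext c
    exact congrArg Submodule.Quotient.mk (Subtype.ext (cechMap_lsmul w u c.1).symm)
  rw [hmap]
  refine isArtinian_ker_homologyMap _ (cech_d_cechMap w (u • (⊤ : Submodule R M)).mkQ)
    (cechMap_injective w hu) (cechMap_surjective w (Submodule.mkQ_surjective _))
    (cechMap_exact w fun m => ?_)
  rw [Submodule.mkQ_apply, Submodule.Quotient.mk_eq_zero, Submodule.mem_smul_pointwise_iff_exists]
  simp

end Exact

variable [IsNoetherianRing R] {t : ℕ} {w : Fin t → R}

theorem isArtinian_homology_cech_of_forall_prime {I : Ideal R}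
    (hI : ∀ q : Ideal R, q.IsPrime → I ≤ q → IsArtinian R (cech w (R ⧸ q)).homology)
    {M : Type u} [AddCommGroup M] [Module R M] [hM : Module.Finite R M]
    (hann : I ≤ Module.annihilator R M) : IsArtinian R (cech w M).homology := by
  induction hM using IsNoetherianRing.induction_on_isQuotientEquivQuotientPrime R with
  | subsingleton N =>
    have : IsArtinian R (cech w N).carrier := isArtinian_cech fun _ _ => Subsingleton.elim _ _
    infer_instance
  | quotient N q e =>
    rw [e.annihilator_eq, Ideal.annihilator_quotient] at hann
    have := hI q.1 q.2 hann
    exact isArtinian_homology_cech_of_linearEquiv w e.symm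
  | exact N₁ N₂ N₃ f g hf hg hex ih₁ ih₃ =>
    have := ih₁ (hann.trans (f.annihilator_le_of_injective hf))
    have := ih₃ (hann.trans (g.annihilator_le_of_surjective hg))
    exact isArtinian_homology_cech_of_exact w hf hg hex

variable [IsLocalRing R]

open scoped Pointwise in
theorem isArtinian_homology_cech_quotient_prime (hw : ∀ i, w i ∈ maximalIdeal R) {p : Ideal R}
    (hp : p.IsPrime) (hrad : maximalIdeal R ≤ (Ideal.span (Set.range w) ⊔ p).radical) :
    IsArtinian R (cech w (R ⧸ p)).homology := by
  induction p using WellFoundedGT.induction with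
  | ind p ih =>
  by_cases hpm : maximalIdeal R ≤ p
  · have hp_eq : p = maximalIdeal R := le_antisymm (le_maximalIdeal hp.ne_top) hpm
    have : IsArtinian R (R ⧸ p) := by
      refine isArtinian_of_supportDim_le_zero ?_
      rw [Module.supportDim_quotient_eq_ringKrullDim, hp_eq]
      exact (ringKrullDim_eq_zero_of_field (ResidueField R)).le
    have : IsArtinian R (cech w (R ⧸ p)).carrier := isArtinian_cech fun i m =>
      Module.mem_annihilator.1 ((Ideal.annihilator_quotient (I := p)).symm ▸ hpm (hw i)) m
    infer_instance
  · obtain ⟨u, hum, hup⟩ := SetLike.not_le_iff_exists.1 hpm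
    have hreg : IsSMulRegular (R ⧸ p) u :=
      (isSMulRegular_quotient_iff_mem_of_smul_mem _ _).2 fun a ha =>
        (hp.mem_or_mem ha).resolve_left hup
    have hquot : IsArtinian R (cech w (QuotSMulTop u (R ⧸ p))).homology := by
      refine isArtinian_homology_cech_of_forall_prime (I := p ⊔ Ideal.span {u}) ?_ ?_
      · intro q hq hle
        have hpq : p ≤ q := le_sup_left.trans hle
        have huq : u ∈ q := hle (Ideal.mem_sup_right (Ideal.mem_span_singleton_self u))
        exact ih q (lt_of_le_of_ne hpq fun h => hup (h ▸ huq)) hq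
          (hrad.trans (Ideal.radical_mono (sup_le_sup_left hpq _)))
      · refine sup_le ?_ ((Ideal.span_singleton_le_iff_mem _).2 (QuotSMulTop.mem_annihilator _ u))
        exact Ideal.annihilator_quotient.ge.trans
          ((u • (⊤ : Submodule R (R ⧸ p))).mkQ.annihilator_le_of_surjective
            (Submodule.mkQ_surjective _))
    have := isArtinian_ker_lsmul_homology_cech w hreg
    refine isArtinian_of_isArtinian_ker_lsmul (u := u) (exists_pow_smul_homology_cech_eq_zero w ?_)
    rw [Ideal.annihilator_quotient]
    exact hrad hum

theorem isArtinian_homology_cech (hw : ∀ i, w i ∈ maximalIdeal R) {M : Type u} [AddCommGroup M]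
    [Module R M] [Module.Finite R M] (hrad : maximalIdeal R ≤
      (Ideal.span (Set.range w) ⊔ Module.annihilator R M).radical) :
    IsArtinian R (cech w M).homology :=
  isArtinian_homology_cech_of_forall_prime (fun _ hq hle =>
    isArtinian_homology_cech_quotient_prime hw hq
      (hrad.trans (Ideal.radical_mono (sup_le_sup_left hle _)))) le_rfl

end CechArtinian

/-! ### The torsion of top local cohomology -/

section HomologyRetract

open DifferentialModule

variable {R : Type u} [CommRing R]

/-- `A` is a retract of the homology of `N`: the map `π` vanishes on boundaries, and it induces an
isomorphism onto `A` from the image in homology of the module `Z` of cycles. For a Čech complex,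
`Z` consists of the elements concentrated in top degree. -/
structure IsHomologyRetract (N : DifferentialModule R) {A : Type u} [AddCommGroup A] [Module R A]
    (π : N.carrier →ₗ[R] A) (Z : Submodule R N.carrier) : Prop where
  map_d : ∀ n, π (N.d n) = 0
  d_eq_zero : ∀ n ∈ Z, N.d n = 0
  exists_eq : ∀ a, ∃ n ∈ Z, π n = a
  exists_d_eq : ∀ n ∈ Z, π n = 0 → ∃ e, N.d e = n

namespace IsHomologyRetract

variable {N : DifferentialModule R} {A : Type u} [AddCommGroup A] [Module R A]
  {π : N.carrier →ₗ[R] A} {Z : Submodule R N.carrier}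

theorem cone (h : IsHomologyRetract N π Z) (z : R) :
    IsHomologyRetract (N.cone z)
      (Submodule.mkQ (divPow z 0).range ∘ₗ localizationAwayMap z π ∘ₗ LinearMap.snd R N.carrier _)
      (Submodule.prod ⊥ (localizationAwayMap z Z.subtype).range) := by
  have hZ (c : (N.cone z).carrier) : c ∈ Submodule.prod ⊥ (localizationAwayMap z Z.subtype).range ↔
      ∃ k, ∃ m ∈ Z, c = (0, divPow z k m) := by
    constructor
    · rintro ⟨hn, ν, hν⟩
      obtain ⟨k, m, rfl⟩ := exists_divPow_eq z ν
      exact ⟨k, m, m.2, Prod.ext hn (hν.symm.trans (localizationAwayMap_divPow z _ k m))⟩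
    · rintro ⟨k, m, hm, rfl⟩
      exact ⟨rfl, divPow z k ⟨m, hm⟩, localizationAwayMap_divPow z _ k _⟩
  have hπ (k : ℕ) (m : N.carrier) : Submodule.mkQ (divPow z 0).range
      (localizationAwayMap z π (divPow z k m)) = FirstLocalCohomology.mk z k (π m) :=
    congrArg _ (localizationAwayMap_divPow z π k m)
  refine ⟨?_, ?_, ?_, ?_⟩
  · rintro ⟨n, ν⟩
    obtain ⟨k, m, rfl⟩ := exists_divPow_eq z ν
    rw [cone_d_divPow]
    change Submodule.mkQ _ (localizationAwayMap z π (divPow z 0 n - divPow z k (N.d m))) = 0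
    rw [map_sub, map_sub, hπ, hπ, h.map_d, map_zero, sub_zero, FirstLocalCohomology.mk_eq_zero_iff]
    exact ⟨0, π n, rfl⟩
  · intro c hc
    obtain ⟨k, m, hm, rfl⟩ := (hZ c).1 hc
    rw [cone_d_divPow, h.d_eq_zero m hm, map_zero, map_zero, map_zero, sub_zero]
    rfl
  · intro a
    obtain ⟨k, b, rfl⟩ := FirstLocalCohomology.exists_mk_eq z a
    obtain ⟨m, hm, rfl⟩ := h.exists_eq b
    exact ⟨(0, divPow z k m), (hZ _).2 ⟨k, m, hm, rfl⟩, hπ k m⟩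
  · intro c hc hzero
    obtain ⟨k, m, hm, rfl⟩ := (hZ c).1 hc
    obtain ⟨i, a, ha⟩ := FirstLocalCohomology.mk_eq_zero_iff.1 ((hπ k m).symm.trans hzero)
    obtain ⟨m', hm', rfl⟩ := h.exists_eq a
    obtain ⟨e, he⟩ := h.exists_d_eq (z ^ i • m - z ^ (i + k) • m')
      (Z.sub_mem (Z.smul_mem _ hm) (Z.smul_mem _ hm')) (by simp [ha])
    refine ⟨(m', divPow z (k + i) (-e)), ?_⟩
    rw [cone_d_divPow, h.d_eq_zero m' hm', map_neg, he, ← divPow_pow_smul z (k + i) m', ← map_sub]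
    refine Prod.ext rfl ((congrArg (divPow z (k + i)) ?_).trans (divPow_add_smul z k i m))
    rw [add_comm k i]
    abel

theorem isArtinian_torsion' (h : IsHomologyRetract N π Z) (z : R)
    [IsArtinian R (N.cone z).homology] :
    IsArtinian R (Submodule.torsion' R A (Submonoid.powers z)) := by
  let g : (N.cone z).homology →ₗ[R] A := Submodule.liftQ _
    (π ∘ₗ LinearMap.fst R N.carrier (LocalizationAway z N.carrier) ∘ₗ Submodule.subtype _) <| by
      rintro c ⟨⟨n, ν⟩, hc⟩
      exact (congrArg (π ∘ Prod.fst) hc).symm.trans (h.map_d n)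
  have hg : Submodule.torsion' R A (Submonoid.powers z) ≤ g.range := by
    intro a ha
    obtain ⟨k, hk⟩ := mem_torsion'_powers.1 ha
    obtain ⟨n, hn, rfl⟩ := h.exists_eq a
    obtain ⟨e, he⟩ := h.exists_d_eq (z ^ k • n) (Z.smul_mem _ hn) (by rw [map_smul, hk])
    have hcycle : (N.cone z).d (n, divPow z k e) = 0 := by
      rw [cone_d_divPow, h.d_eq_zero n hn, he, divPow_pow_smul, sub_self]
      rfl
    exact ⟨Submodule.Quotient.mk ⟨(n, divPow z k e), hcycle⟩, rfl⟩
  exact isArtinian_of_injective (Submodule.inclusion hg) (Submodule.inclusion_injective hg)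

end IsHomologyRetract

theorem exists_isHomologyRetract_cech {t : ℕ} (w : Fin t → R) (M : Type u) [AddCommGroup M]
    [Module R M] :
    ∃ (A : Type u) (_ : AddCommGroup A) (_ : Module R A) (φ : ℕ → M →ₗ[R] A)
      (π : (cech w M).carrier →ₗ[R] A) (Z : Submodule R (cech w M).carrier),
      IsTopLocalCohomology w φ ∧ IsHomologyRetract (cech w M) π Z := by
  induction t with
  | zero =>
    exact ⟨M, _, _, _, LinearMap.id, ⊤, .of_isEmpty w, fun _ => rfl, fun _ _ => rfl,
      fun a => ⟨a, trivial, rfl⟩, fun _ _ hc => ⟨0, hc.symm⟩⟩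
  | succ t ih =>
    obtain ⟨A, _, _, φ, π, Z, hφ, hπ⟩ := ih (Fin.tail w)
    exact ⟨_, _, _, _, _, _, Fin.cons_self_tail w ▸ hφ.cons (w 0), hπ.cone (w 0)⟩

theorem IsTopLocalCohomology.isArtinian_torsion' [IsNoetherianRing R] [IsLocalRing R] {t : ℕ}
    {w : Fin t → R} {z : R} (hw : ∀ i, w i ∈ maximalIdeal R) (hz : z ∈ maximalIdeal R)
    {M L : Type u} [AddCommGroup M] [Module R M] [Module.Finite R M] [AddCommGroup L] [Module R L]
    (hrad : maximalIdeal R ≤ (Ideal.span (Set.range (Fin.cons z w : Fin (t + 1) → R)) ⊔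
      Module.annihilator R M).radical) {ψ : ℕ → M →ₗ[R] L} (hψ : IsTopLocalCohomology w ψ) :
    IsArtinian R (Submodule.torsion' R L (Submonoid.powers z)) := by
  obtain ⟨A, _, _, φ, π, Z, hφ, hπ⟩ := exists_isHomologyRetract_cech w M
  have : IsArtinian R ((cech w M).cone z).homology :=
    isArtinian_homology_cech (w := Fin.cons z w) (Fin.cases hz hw) hrad
  have := hπ.isArtinian_torsion' z
  obtain ⟨f, -⟩ := hψ.exists_linearEquiv hφ
  refine isArtinian_of_injective
    (f.toLinearMap.restrict (q := Submodule.torsion' R A (Submonoid.powers z)) fun l hl => ?_) ?_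
  · obtain ⟨k, hk⟩ := mem_torsion'_powers.1 hl
    exact mem_torsion'_powers.2 ⟨k, by simp [← map_smul, hk]⟩
  · exact fun a b hab => Subtype.ext (f.injective (congrArg Subtype.val hab))

end HomologyRetract

/-! ### Divisible submodules of top local cohomology -/

section DivisibleTorsion

open scoped Pointwise

variable {R : Type u} [CommRing R]

theorem exists_mul_pow_mem_of_mem_minimalPrimes [IsNoetherianRing R] {I P : Ideal R}
    (hP : P ∈ I.minimalPrimes) : ∃ c ∉ P, ∃ n, ∀ r ∈ P ^ n, c * r ∈ I := by
  have hprime : P.IsPrime := hP.1.1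
  have hrad := IsLocalization.AtPrime.radical_map_of_mem_minimalPrimes
    (Localization.AtPrime P) P I hP
  obtain ⟨n, hn⟩ := Ideal.exists_pow_le_of_le_radical_of_fg hrad.ge (IsNoetherian.noetherian _)
  rw [← Ideal.map_pow] at hn
  have hdenom : ∀ r ∈ P ^ n, ∃ c ∉ P, c * r ∈ I := fun r hr =>
    let ⟨c, hc, hcr⟩ := (IsLocalization.algebraMap_mem_map_algebraMap_iff P.primeCompl _ _ _).1
      (hn (Ideal.mem_map_of_mem _ hr))
    ⟨c, hc, hcr⟩
  choose! c hc hcI using hdenom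
  obtain ⟨s, hs⟩ : (P ^ n).FG := IsNoetherian.noetherian _
  refine ⟨∏ r ∈ s, c r, fun h => ?_, n, ?_⟩
  · obtain ⟨r, hr, hrP⟩ := hprime.prod_mem_iff.1 h
    exact hc r (hs ▸ Ideal.subset_span hr) hrP
  · suffices P ^ n ≤ Submodule.comap (LinearMap.mulLeft R (∏ r ∈ s, c r)) I from this
    rw [← hs, Submodule.span_le]
    intro r hr
    exact I.mem_of_dvd (mul_dvd_mul_right (Finset.dvd_prod_of_mem c hr) r)
      (hcI r (hs ▸ Ideal.subset_span hr))

theorem mem_minimalPrimes_of_le_radical_span_singleton_sup [IsNoetherianRing R] [IsLocalRing R]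
    {I P : Ideal R} [hP : P.IsPrime] (hIP : I ≤ P) {a : R} (haP : a ∉ P)
    (ha : a ∈ maximalIdeal R) (hrad : maximalIdeal R ≤ (Ideal.span {a} ⊔ I).radical) :
    P ∈ I.minimalPrimes := by
  have hPm : P < maximalIdeal R :=
    lt_of_le_of_ne (le_maximalIdeal hP.ne_top) fun h => haP (h ▸ ha)
  have hmin : maximalIdeal R ∈ (Ideal.span {a} ⊔ I).minimalPrimes :=
    ⟨⟨inferInstance, sup_le ((Ideal.span_singleton_le_iff_mem _).2 ha) (hIP.trans hPm.le)⟩,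
      fun p hp _ => hrad.trans (hp.1.radical_le_iff.2 hp.2)⟩
  have hcomap {J : Ideal R} (hIJ : I ≤ J) :
      (J.map (Ideal.Quotient.mk I)).comap (Ideal.Quotient.mk I) = J := by
    rw [Ideal.comap_map_of_surjective' _ Ideal.Quotient.mk_surjective, Ideal.mk_ker,
      sup_eq_left.2 hIJ]
  have hlt : P.map (Ideal.Quotient.mk I) < (maximalIdeal R).map (Ideal.Quotient.mk I) :=
    lt_of_le_of_ne (Ideal.map_mono hPm.le) fun h =>
      hPm.ne (by rw [← hcomap hIP, h, hcomap (hIP.trans hPm.le)])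
  have hprime := Ideal.map_isPrime_of_surjective (f := Ideal.Quotient.mk I) (I := P)
    Ideal.Quotient.mk_surjective (by rwa [Ideal.mk_ker])
  have hheight : (P.map (Ideal.Quotient.mk I)).height = 0 :=
    Order.lt_one_iff.1 ((Ideal.height_strict_mono_of_isPrime hlt).trans_le
      (Ideal.map_height_le_one_of_mem_minimalPrimes (sup_comm _ I ▸ hmin)))
  rw [Ideal.minimalPrimes_eq_comap]
  exact ⟨_, Ideal.height_eq_zero_iff.1 hheight, hcomap hIP⟩

section

variable {M : Type*} [AddCommGroup M] [Module R M]

/-- Krull's intersection theorem for `M` localized at `p`. -/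
theorem exists_torsionOf_quotSMulTop_pow_le [IsNoetherianRing R] [Module.Finite R M] {p : Ideal R}
    [p.IsPrime] {z : R} (hz : z ∈ p) {v : M} (hv : Ideal.torsionOf R M v ≤ p) :
    ∃ j : ℕ, Ideal.torsionOf R (QuotSMulTop (z ^ j) M) (Submodule.Quotient.mk v) ≤ p := by
  by_contra! hcon
  let I : Ideal (Localization.AtPrime p) := Ideal.span {algebraMap R _ z}
  have hI : I ≠ ⊤ := by
    rw [Ne, Ideal.span_singleton_eq_top]
    exact (IsLocalization.AtPrime.to_map_mem_maximal_iff _ p z).2 hz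
  have hmem : LocalizedModule.mkLinearMap p.primeCompl M v ∈
      (⨅ i : ℕ, I ^ i • ⊤ : Submodule (Localization.AtPrime p)
        (LocalizedModule p.primeCompl M)) := by
    refine (Submodule.mem_iInf _).2 fun i => ?_
    obtain ⟨s, hs, hsp⟩ := SetLike.not_le_iff_exists.1 (hcon i)
    rw [Ideal.mem_torsionOf_iff, ← Submodule.Quotient.mk_smul, Submodule.Quotient.mk_eq_zero,
      Submodule.mem_smul_pointwise_iff_exists] at hs
    obtain ⟨m, -, hm⟩ := hs
    have hfrac : LocalizedModule.mkLinearMap p.primeCompl M v =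
        algebraMap R (Localization.AtPrime p) z ^ i •
          LocalizedModule.mk m (⟨s, hsp⟩ : p.primeCompl) := by
      rw [← map_pow, algebraMap_smul, LocalizedModule.mkLinearMap_apply, LocalizedModule.smul'_mk,
        hm, LocalizedModule.mk_eq]
      exact ⟨1, by simp [Submonoid.smul_def]⟩
    rw [hfrac]
    exact Submodule.smul_mem_smul (Ideal.pow_mem_pow (Ideal.mem_span_singleton_self _) i) trivial
  rw [Ideal.iInf_pow_smul_eq_bot_of_isLocalRing _ hI, Submodule.mem_bot,
    IsLocalizedModule.eq_zero_iff p.primeCompl] at hmem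
  obtain ⟨s, hs⟩ := hmem
  exact s.2 (hv hs)

/-- A submodule that is divisible by `a` and killed by a power of `P`. Over a local ring with `a` in
the maximal ideal, Nakayama's lemma forces its finitely generated images to vanish. -/
structure IsDivisibleTorsion (a : R) (P : Ideal R) (D : Submodule R M) : Prop where
  le_smul : D ≤ Ideal.span {a} • D
  exists_pow_smul_eq_bot : ∃ n, P ^ n • D = ⊥

namespace IsDivisibleTorsion

variable {a : R} {P : Ideal R}

theorem map {N : Type*} [AddCommGroup N] [Module R N] {D : Submodule R M}
    (h : IsDivisibleTorsion a P D) (f : M →ₗ[R] N) : IsDivisibleTorsion a P (D.map f) where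
  le_smul := by
    rw [← Submodule.map_smul'']
    exact Submodule.map_mono h.le_smul
  exists_pow_smul_eq_bot := by
    obtain ⟨n, hn⟩ := h.exists_pow_smul_eq_bot
    exact ⟨n, by rw [← Submodule.map_smul'', hn, Submodule.map_bot]⟩

theorem span_range {g : ℕ → M} (hg : ∀ k, a • g (k + 1) = g k) {n : ℕ}
    (hn : ∀ r ∈ P ^ n, ∀ k, r • g k = 0) :
    IsDivisibleTorsion a P (Submodule.span R (Set.range g)) where
  le_smul := by
    rw [Submodule.span_le]
    rintro _ ⟨k, rfl⟩
    rw [← hg]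
    exact Submodule.smul_mem_smul (Ideal.mem_span_singleton_self a)
      (Submodule.subset_span ⟨k + 1, rfl⟩)
  exists_pow_smul_eq_bot := by
    refine ⟨n, Submodule.le_annihilator_iff.1 fun r hr => ?_⟩
    rw [Submodule.mem_annihilator_span]
    rintro ⟨_, k, rfl⟩
    exact hn r hr k

theorem eq_bot {D : Submodule R M} (h : IsDivisibleTorsion a P D) [IsLocalRing R]
    (ha : a ∈ maximalIdeal R) {I : Ideal R} (hIP : I ≤ P) (hM : IsSmall I M) : D = ⊥ := by
  obtain ⟨n, hn⟩ := h.exists_pow_smul_eq_bot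
  induction n with
  | zero => simpa using hn
  | succ n ih =>
    apply ih
    have hdiv : P ^ n • D ≤ Ideal.span {a} • P ^ n • D := by
      rw [← mul_smul, mul_comm, mul_smul]
      exact smul_mono_right _ h.le_smul
    have hkilled : ∀ r ∈ I, ∀ d : ↥(P ^ n • D), r • d = 0 := by
      rintro r hr ⟨d, hd⟩
      have hrd := Submodule.smul_mem_smul (hIP hr) hd
      rw [← mul_smul, ← pow_succ', hn, Submodule.mem_bot] at hrd
      exact Subtype.ext hrd
    have : IsNoetherian R ↥(P ^ n • D) :=
      (hM.of_injective (Submodule.injective_subtype _)).isNoetherian_of_smul_eq_zero hkilled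
    refine Submodule.eq_bot_of_le_smul_of_le_jacobson_bot _ _
      (Module.Finite.iff_fg.1 inferInstance) hdiv ?_
    rw [Ideal.span_singleton_le_iff_mem]
    exact maximalIdeal_le_jacobson _ ha

end IsDivisibleTorsion

theorem FirstLocalCohomology.mem_torsion'_of_forall_mk_eq_zero [IsNoetherianRing R] [IsLocalRing R]
    [Module.Finite R M] {a : R} (ha : a ∈ maximalIdeal R) {v : M}
    (hv : ∀ k, FirstLocalCohomology.mk a k v = 0) :
    v ∈ Submodule.torsion' R M (Submonoid.powers a) := by
  have hI : Ideal.span {a} ≠ ⊤ := by rwa [Ne, Ideal.span_singleton_eq_top]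
  rw [← Submodule.Quotient.mk_eq_zero, ← Submodule.mem_bot R,
    ← Ideal.iInf_pow_smul_eq_bot_of_isLocalRing _ hI, Submodule.mem_iInf]
  intro k
  obtain ⟨i, m, hm⟩ := mk_eq_zero_iff.1 (hv k)
  have hsub : v - a ^ k • m ∈ Submodule.torsion' R M (Submonoid.powers a) :=
    mem_torsion'_powers.2 ⟨i, by rw [smul_sub, hm, smul_smul, pow_add, sub_self]⟩
  rw [(Submodule.Quotient.eq _).2 hsub, Submodule.Quotient.mk_smul]
  exact Submodule.smul_mem_smul (Ideal.pow_mem_pow (Ideal.mem_span_singleton_self a) k) trivial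

theorem FirstLocalCohomology.exists_isDivisibleTorsion [IsNoetherianRing R] [IsLocalRing R]
    [Module.Finite R M] {a b : R} {P : Ideal R} [hP : P.IsPrime] (ha : a ∈ maximalIdeal R)
    (haP : a ∉ P) (hrad : maximalIdeal R ≤ (Ideal.span {a} ⊔ Module.annihilator R M).radical)
    {m : M} (hm : Ideal.torsionOf R M (b • m) ≤ P) :
    ∃ D : Submodule R (FirstLocalCohomology a M),
      IsDivisibleTorsion a P D ∧ ∃ d ∈ D, b • d ≠ 0 := by
  have hann : Module.annihilator R M ≤ P := fun r hr => hm (Module.mem_annihilator.1 hr _)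
  obtain ⟨c, hcP, n, hcn⟩ := exists_mul_pow_mem_of_mem_minimalPrimes
    (mem_minimalPrimes_of_le_radical_span_singleton_sup hann haP ha hrad)
  refine ⟨_, .span_range (g := fun k => mk a k (c • m)) (n := n) (fun k => ?_)
    fun r hr k => ?_, ?_⟩
  · rw [← map_smul]
    simpa using mk_add_smul a k 1 (c • m)
  · rw [← map_smul, smul_smul, mul_comm, Module.mem_annihilator.1 (hcn r hr), map_zero]
  · by_contra! hcon
    obtain ⟨i, hi⟩ := mem_torsion'_powers.1 <| mem_torsion'_of_forall_mk_eq_zero ha fun k =>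
      (map_smul _ _ _).trans (hcon (mk a k (c • m)) (Submodule.subset_span ⟨k, rfl⟩))
    rcases hP.mem_or_mem (hm (show a ^ i * c ∈ _ by
      rw [Ideal.mem_torsionOf_iff, mul_smul, smul_comm c b, hi])) with h | h
    exacts [haP (hP.mem_of_pow_mem i h), hcP h]

theorem exists_pow_add_smul_eq_of_isArtinian_torsion' (z : R)
    [IsArtinian R (Submodule.torsion' R M (Submonoid.powers z))] :
    ∃ e : ℕ, ∀ c ∈ Submodule.torsion' R M (Submonoid.powers z), ∀ k,
      ∃ l : M, z ^ (e + k) • l = z ^ e • c := by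
  let f : Module.End R (Submodule.torsion' R M (Submonoid.powers z)) := algebraMap R _ z
  have hf (n) (c) : (f ^ n) c = z ^ n • c := by
    rw [← map_pow, Module.algebraMap_end_apply]
  obtain ⟨e, he⟩ := Filter.eventually_atTop.1 f.eventually_iInf_range_pow_eq
  refine ⟨e, fun c hc k => ?_⟩
  have hrange : (f ^ e) ⟨c, hc⟩ ∈ LinearMap.range (f ^ (e + k)) := by
    rw [← he (e + k) (Nat.le_add_right _ _), he e le_rfl]
    exact ⟨_, rfl⟩
  obtain ⟨l, hl⟩ := hrange
  rw [hf, hf] at hl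
  exact ⟨l, congrArg Subtype.val hl⟩

theorem FirstLocalCohomology.exists_pow_smul_eq_zero_of_ofQuotSMulTop_eq_zero (z : R)
    [IsArtinian R (Submodule.torsion' R M (Submonoid.powers z))] :
    ∃ e : ℕ, ∀ j, ∀ q : QuotSMulTop (z ^ j) M, ofQuotSMulTop z j q = 0 → z ^ e • q = 0 := by
  obtain ⟨e, he⟩ := exists_pow_add_smul_eq_of_isArtinian_torsion' (M := M) z
  refine ⟨e, fun j q hq => ?_⟩
  obtain ⟨l, rfl⟩ := Submodule.mkQ_surjective _ q
  obtain ⟨i, l', hl'⟩ := mk_eq_zero_iff.1 hq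
  obtain ⟨l'', hl''⟩ := he (l - z ^ j • l') (mem_torsion'_powers.2
    ⟨i, by rw [smul_sub, hl', smul_smul, ← pow_add, sub_self]⟩) j
  rw [← map_smul, Submodule.mkQ_apply, Submodule.Quotient.mk_eq_zero,
    Submodule.mem_smul_pointwise_iff_exists]
  refine ⟨z ^ e • l'' + z ^ e • l', trivial, ?_⟩
  rw [smul_add, smul_smul, ← pow_add, add_comm j, hl'']
  module

theorem le_radical_span_sup_annihilator_quotSMulTop {t : ℕ} {z : R} {w : Fin t → R} {I : Ideal R}
    (hrad : I ≤ (Ideal.span (Set.range (Fin.cons z w : Fin (t + 1) → R)) ⊔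
      Module.annihilator R M).radical) (j : ℕ) :
    I ≤ (Ideal.span (Set.range w) ⊔ Module.annihilator R (QuotSMulTop (z ^ j) M)).radical := by
  refine hrad.trans (Ideal.radical_le_radical_iff.2 (sup_le ?_ ?_))
  · rw [Ideal.span_le, Set.range_subset_iff]
    exact Fin.cases ⟨j, Ideal.mem_sup_right (QuotSMulTop.mem_annihilator _ _)⟩ fun i =>
      Ideal.le_radical (Ideal.mem_sup_left (Ideal.subset_span ⟨i, rfl⟩))
  · exact (LinearMap.annihilator_le_of_surjective _ (Submodule.mkQ_surjective _)).trans
      (le_sup_right.trans Ideal.le_radical)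

theorem torsionOf_mul_pow_smul_mk_le {p : Ideal R} [hp : p.IsPrime] {z b : R} (hz : z ∉ p) {m : M}
    (hm : Ideal.torsionOf R M (b • m) ≤ p) (e : ℕ) :
    Ideal.torsionOf R (M ⧸ Submodule.torsion' R M (Submonoid.powers z))
      ((b * z ^ e) • Submodule.Quotient.mk m) ≤ p := by
  intro s hs
  rw [Ideal.mem_torsionOf_iff, ← Submodule.Quotient.mk_smul, ← Submodule.Quotient.mk_smul,
    Submodule.Quotient.mk_eq_zero, mem_torsion'_powers] at hs
  obtain ⟨i, hi⟩ := hs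
  have hmem : z ^ i * (z ^ e * s) ∈ p := hm (by rw [Ideal.mem_torsionOf_iff, ← hi]; module)
  have hpow (n : ℕ) : z ^ n ∉ p := fun h => hz (hp.mem_of_pow_mem n h)
  exact (hp.mem_or_mem ((hp.mem_or_mem hmem).resolve_left (hpow i))).resolve_left (hpow e)

end

/-- In the inductive step the submodule is found in `L / zʲL`, where `L` is the top local
cohomology with respect to the remaining elements, and transported by `ℓ ↦ [ℓ / zʲ]`; the kernel of
that map is controlled by the `z`-torsion of `L`, which is Artinian. -/
theorem IsTopLocalCohomology.exists_isDivisibleTorsion [IsNoetherianRing R] [IsLocalRing R] {t : ℕ}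
    {p : Fin (t + 1) → PrimeSpectrum R} (hp : Monotone p) {z : Fin (t + 1) → R}
    (hz : ∀ i, z i ∈ maximalIdeal R) (hz_notMem : ∀ i, z i ∉ (p i).asIdeal)
    (hz_mem : ∀ i : Fin t, z i.castSucc ∈ (p i.succ).asIdeal) {M : Type u} [AddCommGroup M]
    [Module R M] [Module.Finite R M] {b : R} {m : M}
    (hrad : maximalIdeal R ≤ (Ideal.span (Set.range z) ⊔ Module.annihilator R M).radical)
    (hm : Ideal.torsionOf R M (b • m) ≤ (p 0).asIdeal) {H : Type u} [AddCommGroup H] [Module R H]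
    {φ : ℕ → M →ₗ[R] H} (hφ : IsTopLocalCohomology z φ) :
    ∃ D : Submodule R H, IsDivisibleTorsion (z (Fin.last t)) (p (Fin.last t)).asIdeal D ∧
      ∃ d ∈ D, b • d ≠ 0 := by
  induction t generalizing M H b with
  | zero =>
    rw [show Set.range z = {z 0} from Set.range_unique (ι := Fin 1)] at hrad
    obtain ⟨D, hD, d, hd, hbd⟩ := FirstLocalCohomology.exists_isDivisibleTorsion (hz 0)
      (hz_notMem 0) hrad hm
    have hcons := (of_isEmpty (M := M) (Fin.tail z)).cons (z 0)
    rw [Fin.cons_self_tail] at hcons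
    obtain ⟨f, -⟩ := hcons.exists_linearEquiv hφ
    exact ⟨_, hD.map f.toLinearMap, f d, ⟨d, hd, rfl⟩, by
      rwa [← map_smul, Ne, LinearEquiv.map_eq_zero_iff]⟩
  | succ t ih =>
    obtain ⟨z, w, rfl⟩ : ∃ z0 w, Fin.cons z0 w = z := ⟨_, _, Fin.cons_self_tail z⟩
    have hw (i) : w i ∈ maximalIdeal R := hz i.succ
    let M' := M ⧸ Submodule.torsion' R M (Submonoid.powers z)
    obtain ⟨L, _, _, ψ, hψ⟩ := exists_isTopLocalCohomology w M'
    have hrad' := hrad.trans (Ideal.radical_mono (sup_le_sup_left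
      (LinearMap.annihilator_le_of_surjective (Submodule.mkQ _ : M →ₗ[R] M')
        (Submodule.mkQ_surjective _)) _))
    have : IsArtinian R (Submodule.torsion' R L (Submonoid.powers z)) :=
      hψ.isArtinian_torsion' hw (hz 0) hrad'
    obtain ⟨e, he⟩ := FirstLocalCohomology.exists_pow_smul_eq_zero_of_ofQuotSMulTop_eq_zero
      (M := L) z
    obtain ⟨j, hj⟩ := exists_torsionOf_quotSMulTop_pow_le (z := z) (hz_mem 0)
      ((torsionOf_mul_pow_smul_mk_le (z := z) (hz_notMem 0) hm e).trans (hp (Fin.zero_le 1)))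
    obtain ⟨D, hD, d, hd, hbd⟩ := ih (p := Fin.tail p) (b := b * z ^ e)
      (m := Submodule.Quotient.mk (Submodule.Quotient.mk m))
      (hp.comp Fin.strictMono_succ.monotone) hw (fun i => hz_notMem i.succ) (fun i => hz_mem i.succ)
      (le_radical_span_sup_annihilator_quotSMulTop hrad' j) hj (hψ.quotSMulTop (z ^ j))
    obtain ⟨f, -⟩ := (hψ.cons z).comp_mkQ_torsion'_powers.exists_linearEquiv hφ
    refine ⟨_, hD.map (f.toLinearMap ∘ₗ FirstLocalCohomology.ofQuotSMulTop z j), _, ⟨d, hd, rfl⟩,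
      fun h => hbd ?_⟩
    rw [← map_smul, LinearMap.comp_apply, LinearEquiv.coe_coe, LinearEquiv.map_eq_zero_iff] at h
    rw [mul_comm, mul_smul]
    exact he j _ h

end DivisibleTorsion

/-! ### Systems of parameters along a chain of primes -/

section Parameters

variable {R : Type*} [CommRing R]

theorem le_height_of_strictMono {t : ℕ} {p : Fin (t + 1) → PrimeSpectrum R} (hp : StrictMono p)
    (i : Fin (t + 1)) : ((i : ℕ) : ℕ∞) ≤ (p i).asIdeal.height := by
  rw [PrimeSpectrum.height_eq_orderHeight]
  exact Order.index_le_height (LTSeries.mk t p hp) i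

variable [IsNoetherianRing R]

theorem exists_mem_notMem_add_one_le_height {J p q : Ideal R} [p.IsPrime] (hpq : p < q) {k : ℕ}
    (hJ : k ≤ J.height) (hq : (k + 1 : ℕ) ≤ q.height) :
    ∃ w ∈ q, w ∉ p ∧ (k + 1 : ℕ) ≤ (J ⊔ Ideal.span {w}).height := by
  classical
  have hfin : J.minimalPrimes.Finite := Ideal.finite_minimalPrimes_of_isNoetherianRing R J
  let B : Finset (Ideal R) := insert p (hfin.toFinset.filter (·.height < (k + 1 : ℕ)))
  obtain ⟨w, hw, hwB⟩ : ∃ w ∈ q, ∀ r ∈ B, w ∉ r := by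
    have hprime : ∀ r ∈ B, r ≠ p → r ≠ p → r.IsPrime := by
      simp only [B, Finset.mem_insert, Finset.mem_filter, hfin.mem_toFinset]
      rintro r (rfl | hr) hne
      · exact absurd rfl hne
      · exact fun _ => hr.1.1.1
    have hnot : ¬ ∃ r ∈ B, q ≤ r := by
      simp only [B, Finset.mem_insert, Finset.mem_filter]
      rintro ⟨r, rfl | hr, hqr⟩
      · exact hpq.not_ge hqr
      · exact hr.2.not_ge (hq.trans (Ideal.height_mono hqr))
    have := mt (Ideal.subset_union_prime (f := id) p p hprime).1 hnot
    simpa [Set.not_subset] using this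
  refine ⟨w, hw, hwB p (Finset.mem_insert_self _ _), ?_⟩
  rw [Ideal.height_eq_inf_minimalPrimes]
  refine le_iInf₂ fun r ⟨⟨hr, hJr⟩, _⟩ => ?_
  obtain ⟨r', hr', hle⟩ := Ideal.exists_minimalPrimes_le (le_sup_left.trans hJr)
  by_cases hht : r'.height < (k + 1 : ℕ)
  · have hwr' : w ∉ r' := hwB r' (Finset.mem_insert_of_mem
      (Finset.mem_filter.2 ⟨hfin.mem_toFinset.2 hr', hht⟩))
    have hwr : w ∈ r := hJr (Ideal.mem_sup_right (Ideal.mem_span_singleton_self w))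
    have := hr'.1.1
    rw [Nat.cast_succ]
    exact (add_le_add_left (hJ.trans (Ideal.height_mono hr'.1.2)) 1).trans
      (Ideal.height_add_one_le_of_lt_of_isPrime (hle.lt_of_ne fun h => hwr' (h ▸ hwr)))
  · exact (not_lt.1 hht).trans (Ideal.height_mono hle)

theorem exists_le_height_span_range_of_strictMono {t : ℕ} {p : Fin (t + 1) → PrimeSpectrum R}
    (hp : StrictMono p) :
    ∃ z : Fin t → R, (∀ i, z i ∉ (p i.castSucc).asIdeal) ∧ (∀ i, z i ∈ (p i.succ).asIdeal) ∧
      t ≤ (Ideal.span (Set.range z)).height := by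
  induction t with
  | zero => exact ⟨![], by simp, by simp, by simp⟩
  | succ t ih =>
    obtain ⟨z, hz_notMem, hz_mem, hz⟩ := ih (hp.comp Fin.strictMono_castSucc)
    obtain ⟨w, hw_mem, hw_notMem, hw⟩ := exists_mem_notMem_add_one_le_height
      (hp (Fin.last t).castSucc_lt_succ) hz (le_height_of_strictMono hp (Fin.last t).succ)
    refine ⟨Fin.snoc z w, ?_, ?_, ?_⟩
    · exact Fin.lastCases (by simpa using hw_notMem) (by simpa using hz_notMem)
    · exact Fin.lastCases (by simpa using hw_mem) (by simpa using hz_mem)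
    · rwa [Fin.range_snoc, Ideal.span_insert, sup_comm]

theorem maximalIdeal_le_radical_of_ringKrullDim_le_height [IsLocalRing R] {I : Ideal R}
    (h : ringKrullDim R ≤ I.height) : maximalIdeal R ≤ I.radical := by
  rw [Ideal.radical_eq_sInf]
  refine le_sInf fun q ⟨hIq, hq⟩ => ?_
  rw [← maximalIdeal_height_eq_ringKrullDim, WithBot.coe_le_coe] at h
  exact (Ideal.eq_of_le_of_height_le q (le_maximalIdeal hq.ne_top)
    (h.trans (Ideal.height_mono hIq))).ge

end Parameters

/-! ### The theorem for rings in which every prime lies on a long chain -/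

section Main

open scoped Matrix

theorem mem_of_radical_span_range_eq {R : Type*} [CommRing R] {ι : Type*} {x : ι → R} {I : Ideal R}
    (h : (Ideal.span (Set.range x)).radical = I) (i : ι) : x i ∈ I :=
  h ▸ Ideal.le_radical (Ideal.subset_span ⟨i, rfl⟩)

theorem exists_smul_ne_zero_and_smul_smul_eq_zero {R : Type*} [CommRing R] {H : Type*}
    [AddCommGroup H] [Module R H] {I : Ideal R} {N : ℕ} {d : H} (hd : d ≠ 0)
    (hN : ∀ r ∈ I ^ N, r • d = 0) : ∃ s : R, s • d ≠ 0 ∧ ∀ r ∈ I, r • s • d = 0 := by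
  induction N with
  | zero => exact absurd (by simpa using hN 1 (by simp)) hd
  | succ N ih =>
    by_cases h : ∀ s ∈ I ^ N, s • d = 0
    · exact ih h
    · push Not at h
      obtain ⟨s, hs, hsd⟩ := h
      refine ⟨s, hsd, fun r hr => ?_⟩
      rw [smul_smul]
      exact hN _ (pow_succ' I N ▸ Ideal.mul_mem_mul hr hs)

namespace IsTopLocalCohomology

variable {R : Type*} [CommRing R] {ι : Type*} [Fintype ι] {x : ι → R} {M H : Type*}
  [AddCommGroup M] [Module R M] [AddCommGroup H] [Module R H] {φ : ℕ → M →ₗ[R] H}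

theorem exists_le_range_of_fg (h : IsTopLocalCohomology x φ) {Z : Submodule R H} (hZ : Z.FG) :
    ∃ n, Z ≤ LinearMap.range (φ n) := by
  obtain ⟨s, rfl⟩ := hZ
  choose n m hm using h.exists_eq
  refine ⟨s.sup n, Submodule.span_le.2 fun d hd => ?_⟩
  obtain ⟨k, hk⟩ := Nat.exists_eq_add_of_le (Finset.le_sup (f := n) hd)
  exact ⟨(∏ i, x i) ^ k • m d, by rw [hk, h.map_add_smul, hm]⟩

variable [IsNoetherianRing R]

theorem exists_forall_mem_pow_smul_eq_zero (h : IsTopLocalCohomology x φ) {I : Ideal R}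
    (hI : I ≤ (Ideal.span (Set.range x)).radical) (d : H) : ∃ N, ∀ r ∈ I ^ N, r • d = 0 := by
  obtain ⟨n, m, rfl⟩ := h.exists_eq d
  obtain ⟨N, hN⟩ := Ideal.exists_pow_le_of_le_radical_of_fg
    (hI.trans (radical_span_range_le_radical_powIdeal x n)) (IsNoetherian.noetherian _)
  refine ⟨N, fun r hr => ?_⟩
  rw [← map_smul]
  exact h.map_eq_zero_of_mem (Submodule.smul_mem_smul (hN hr) trivial)

end IsTopLocalCohomology

variable {R : Type u} [CommRing R] {t : ℕ}

theorem mem_limitClosure_of_det_smul_mem {x y : Fin t → R} {A : Matrix (Fin t) (Fin t) R}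
    (hA : A *ᵥ x = y) (hyx : ∀ i, x i ∈ (Ideal.span (Set.range y)).radical) {M : Type u}
    [AddCommGroup M] [Module R M] {m : M} (hm : A.det • m ∈ limitClosure y) :
    m ∈ limitClosure x := by
  obtain ⟨Hx, _, _, φ, hφ⟩ := exists_isTopLocalCohomology x M
  obtain ⟨Hy, _, _, ψ, hψ⟩ := exists_isTopLocalCohomology y M
  have hxy (i) : y i ∈ (Ideal.span (Set.range x)).radical :=
    Ideal.le_radical (hA ▸ mulVec_apply_mem_span_range A x i)
  obtain ⟨θ, hθ⟩ := hφ.exists_isDeterminantalMap hψ hxy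
  rw [hψ.mem_limitClosure_iff, ← hθ 1 1 A (by simpa using hA)] at hm
  rw [hφ.mem_limitClosure_iff]
  exact hθ.injective hφ hψ hxy hyx (hm.trans (map_zero θ).symm)

variable [IsLocalRing R]

theorem exists_prime_ne_maximalIdeal_of_radical_ne {I : Ideal R} (hI : I ≤ maximalIdeal R)
    (h : I.radical ≠ maximalIdeal R) :
    ∃ P : PrimeSpectrum R, I ≤ P.asIdeal ∧ P.asIdeal ≠ maximalIdeal R := by
  by_contra! hP
  refine h (le_antisymm ((maximalIdeal.isMaximal R).isPrime.radical_le_iff.2 hI) ?_)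
  rw [Ideal.radical_eq_sInf]
  exact le_sInf fun P hIP => (hP ⟨P, hIP.2⟩ hIP.1).ge

variable [IsNoetherianRing R]

theorem IsTopLocalCohomology.exists_torsionBySet_maximalIdeal_le_range {u : Fin t → R}
    (hu : ∀ i, u i ∈ maximalIdeal R) {M H : Type u} [AddCommGroup M] [Module R M]
    [Module.Finite R M] [AddCommGroup H] [Module R H] {φ : ℕ → M →ₗ[R] H}
    (h : IsTopLocalCohomology u φ) (hdim : Module.supportDim R M ≤ t) :
    ∃ n, Submodule.torsionBySet R H (maximalIdeal R : Set R) ≤ LinearMap.range (φ n) := by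
  set Z := Submodule.torsionBySet R H (maximalIdeal R : Set R)
  have hle : Ideal.span (Set.range u) ≤ maximalIdeal R :=
    Ideal.span_le.2 (Set.range_subset_iff.2 hu)
  have : IsNoetherian R Z :=
    ((h.isSmall hu hdim).of_injective Z.injective_subtype).isNoetherian_of_smul_eq_zero
      fun r hr c => Subtype.ext ((Submodule.mem_torsionBySet_iff _ _).1 c.2 ⟨r, hle hr⟩)
  exact h.exists_le_range_of_fg (Submodule.fg_top Z |>.1 (IsNoetherian.noetherian ⊤))

theorem IsTopLocalCohomology.exists_mem_torsionBySet_ne_zero_map_eq_zero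
    (hdim : ringKrullDim R ≤ (t + 1 : ℕ)) {u y : Fin (t + 1) → R}
    (hu : (Ideal.span (Set.range u)).radical = maximalIdeal R) (hy : ∀ i, y i ∈ maximalIdeal R)
    {p : Fin (t + 2) → PrimeSpectrum R} (hp : StrictMono p)
    (hyp : Ideal.span (Set.range y) ≤ (p (Fin.last t).castSucc).asIdeal)
    {H H' : Type u} [AddCommGroup H] [Module R H] [AddCommGroup H'] [Module R H']
    {φ : ℕ → R →ₗ[R] H} {ψ : ℕ → R →ₗ[R] H'} (hφ : IsTopLocalCohomology u φ)
    (hψ : IsTopLocalCohomology y ψ) (θ : H →ₗ[R] H') :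
    ∃ d ∈ Submodule.torsionBySet R H (maximalIdeal R : Set R), d ≠ 0 ∧ θ d = 0 := by
  obtain ⟨z, hz_notMem, hz_mem, hz⟩ := exists_le_height_span_range_of_strictMono hp
  replace hz := maximalIdeal_le_radical_of_ringKrullDim_le_height
    (hdim.trans (WithBot.coe_le_coe.2 hz))
  have hzm (i) : z i ∈ maximalIdeal R := le_maximalIdeal (p i.succ).2.ne_top (hz_mem i)
  obtain ⟨Hz, _, _, χ, hχ⟩ := exists_isTopLocalCohomology z R
  obtain ⟨D, hD, d, hd, hd0⟩ := hχ.exists_isDivisibleTorsion (p := p ∘ Fin.castSucc) (b := 1)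
    (m := 1) (hp.monotone.comp Fin.strictMono_castSucc.monotone) hzm hz_notMem
    (fun i => hz_mem i.castSucc) (hz.trans (Ideal.radical_mono le_sup_left))
    (fun r hr => by simp_all [Ideal.mem_torsionOf_iff])
  have hzu (i) : u i ∈ (Ideal.span (Set.range z)).radical := hz (mem_of_radical_span_range_eq hu i)
  obtain ⟨η, hη⟩ := hχ.exists_isDeterminantalMap hφ hzu
  have hη_inj := hη.injective hχ hφ hzu fun i => hu ▸ hzm i
  have hbot : D.map (θ ∘ₗ η) = ⊥ := (hD.map _).eq_bot (hzm _) hyp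
    (hψ.isSmall hy (Module.supportDim_self_eq_ringKrullDim R |>.trans_le hdim))
  obtain ⟨N, hN⟩ := hφ.exists_forall_mem_pow_smul_eq_zero hu.ge (η d)
  obtain ⟨s, hs0, hs⟩ := exists_smul_ne_zero_and_smul_smul_eq_zero (d := η d)
    ((map_ne_zero_iff η hη_inj).2 (one_smul R d ▸ hd0)) hN
  refine ⟨s • η d, (Submodule.mem_torsionBySet_iff _ _).2 fun r => hs r r.2, hs0, ?_⟩
  have hmem := Submodule.mem_map_of_mem (f := θ ∘ₗ η) (D.smul_mem s hd)
  rwa [hbot, Submodule.mem_bot, LinearMap.comp_apply, map_smul] at hmem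

theorem exists_notMem_limitClosure_det_smul_mem (hdim : ringKrullDim R ≤ (t + 1 : ℕ))
    {u x y : Fin (t + 1) → R} (hu : (Ideal.span (Set.range u)).radical = maximalIdeal R)
    (hx : (Ideal.span (Set.range x)).radical = maximalIdeal R) {H : Type u} [AddCommGroup H]
    [Module R H] {φ : ℕ → R →ₗ[R] H} (hφ : IsTopLocalCohomology u φ) {n : ℕ}
    (hn : Submodule.torsionBySet R H (maximalIdeal R : Set R) ≤ LinearMap.range (φ n))
    (hxu : ∀ i, x i ∈ powIdeal u n) {A : Matrix (Fin (t + 1)) (Fin (t + 1)) R} (hA : A *ᵥ x = y)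
    {p : Fin (t + 2) → PrimeSpectrum R} (hp : StrictMono p)
    (hyp : Ideal.span (Set.range y) ≤ (p (Fin.last t).castSucc).asIdeal) :
    ∃ r : R, r ∉ limitClosure x ∧ A.det • r ∈ limitClosure y := by
  have hy (i) : y i ∈ maximalIdeal R :=
    le_maximalIdeal (p _).2.ne_top (hyp (Ideal.subset_span ⟨i, rfl⟩))
  obtain ⟨Hx, _, _, χ, hχ⟩ := exists_isTopLocalCohomology x R
  obtain ⟨Hy, _, _, ψ, hψ⟩ := exists_isTopLocalCohomology y R
  have hux (i) : x i ∈ (Ideal.span (Set.range u)).radical := hu ▸ mem_of_radical_span_range_eq hx i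
  obtain ⟨θx, hθx⟩ := hφ.exists_isDeterminantalMap hχ hux
  obtain ⟨θy, hθy⟩ := hφ.exists_isDeterminantalMap hψ fun i => hu ▸ hy i
  obtain ⟨d, hd, hd0, hθd⟩ :=
    hφ.exists_mem_torsionBySet_ne_zero_map_eq_zero hdim hu hy hp hyp hψ θy
  obtain ⟨c, rfl⟩ := hn hd
  obtain ⟨B, hB⟩ := exists_mulVec_eq hxu
  refine ⟨B.det • c, fun h => ?_, ?_⟩
  · rw [hχ.mem_limitClosure_iff, ← hθx n 1 B (by rw [hB, pow_one])] at h
    have hinj := hθx.injective hφ hχ hux fun i => hx ▸ mem_of_radical_span_range_eq hu i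
    exact hd0 (hinj (h.trans (map_zero θx).symm))
  · rwa [hψ.mem_limitClosure_iff, smul_smul, ← Matrix.det_mul,
      ← hθy n 1 (A * B) (by rw [← Matrix.mulVec_mulVec, hB, hA, pow_one])]

/-- The bound is chosen so that the socle of the top local cohomology along a fixed system of
parameters `u` comes from `R / (u₁ⁿ, …, u_tⁿ)`, and hence from `R / (x)^lim`. -/
theorem exists_bound_radical_eq_maximalIdeal_iff (hdim : ringKrullDim R ≤ t)
    (hchain : ∀ P : PrimeSpectrum R, P.asIdeal ≠ maximalIdeal R →
      ∃ p : Fin (t + 1) → PrimeSpectrum R, StrictMono p ∧ ∃ i < Fin.last t, P ≤ p i) :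
    ∃ ℓ : ℕ, 0 < ℓ ∧ ∀ (x y : Fin t → R) (A : Matrix (Fin t) (Fin t) R),
      (Ideal.span (Set.range x)).radical = maximalIdeal R →
      Ideal.span (Set.range x) ≤ maximalIdeal R ^ ℓ → A *ᵥ x = y →
      ((Ideal.span (Set.range y)).radical = maximalIdeal R ↔
        ∀ r : R, A.det • r ∈ limitClosure y → r ∈ limitClosure x) := by
  by_cases! hsop : ∀ u : Fin t → R, (Ideal.span (Set.range u)).radical ≠ maximalIdeal R
  · exact ⟨1, one_pos, fun x y A hx => absurd hx (hsop x)⟩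
  obtain ⟨u, hu⟩ := hsop
  obtain ⟨H, _, _, φ, hφ⟩ := exists_isTopLocalCohomology u R
  obtain ⟨n, hn⟩ := hφ.exists_torsionBySet_maximalIdeal_le_range
    (mem_of_radical_span_range_eq hu)
    (Module.supportDim_self_eq_ringKrullDim R |>.trans_le hdim)
  obtain ⟨N, hN⟩ := Ideal.exists_pow_le_of_le_radical_of_fg
    (hu.ge.trans (radical_span_range_le_radical_powIdeal u n)) (IsNoetherian.noetherian _)
  refine ⟨N + 1, N.succ_pos, fun x y A hx hxN hA => ⟨fun hy r => ?_, fun h => ?_⟩⟩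
  · exact mem_limitClosure_of_det_smul_mem hA fun i =>
      hy ▸ mem_of_radical_span_range_eq hx i
  · by_contra hy
    have hyx : Ideal.span (Set.range y) ≤ Ideal.span (Set.range x) :=
      hA ▸ Ideal.span_le.2 (Set.range_subset_iff.2 (mulVec_apply_mem_span_range A x))
    obtain ⟨P, hyP, hP⟩ := exists_prime_ne_maximalIdeal_of_radical_ne
      (hyx.trans (hx ▸ Ideal.le_radical)) hy
    obtain ⟨p, hp, i, hi, hPi⟩ := hchain P hP
    obtain _ | t := t
    · exact absurd hi i.zero_le.not_gt
    obtain ⟨r, hrx, hry⟩ := exists_notMem_limitClosure_det_smul_mem hdim hu hx hφ hn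
      (fun i => hN (Ideal.pow_le_pow_right N.le_succ (hxN (Ideal.subset_span ⟨i, rfl⟩)))) hA hp
      (hyP.trans (hPi.trans (hp.monotone (Fin.le_castSucc_iff.2 hi))))
    exact hrx (h r hry)

end Main

/-! ### Saturated chains through a given prime -/

section SaturatedChains

section PartialOrder

variable {α : Type*} [PartialOrder α] [FiniteDimensionalOrder α]

theorem exists_relSeries_covBy_length_le (s : LTSeries α) :
    ∃ c : RelSeries {(a, b) : α × α | a ⋖ b},
      c.head = s.head ∧ c.last = s.last ∧ s.length ≤ c.length := by
  have : WellFoundedLT α := ⟨SetRel.IsWellFounded.of_finiteDimensional {(a, b) : α × α | a < b}⟩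
  have : WellFoundedGT α :=
    ⟨SetRel.IsWellFounded.inv_of_finiteDimensional {(a, b) : α × α | a < b}⟩
  obtain ⟨c, i, hi, hzero, hlast⟩ := s.exists_relSeries_covBy
  refine ⟨c, ?_, ?_, by simpa using Fintype.card_le_of_embedding i⟩
  · rw [RelSeries.head, RelSeries.head, ← hi, Function.comp_apply, hzero]
  · rw [RelSeries.last, RelSeries.last, ← hi, Function.comp_apply, hlast]

theorem exists_relSeries_covBy_of_le {a b : α} (hab : a ≤ b) :
    ∃ c : RelSeries {(a, b) : α × α | a ⋖ b}, c.head = a ∧ c.last = b := by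
  rcases hab.eq_or_lt with rfl | hlt
  · exact ⟨RelSeries.singleton _ a, rfl, rfl⟩
  · obtain ⟨c, hhead, hlast, -⟩ :=
      exists_relSeries_covBy_length_le ((RelSeries.singleton _ b).cons a hlt)
    exact ⟨c, hhead, hlast.trans (RelSeries.last_cons _ _ _)⟩

end PartialOrder

variable {R : Type*} [CommRing R]

theorem le_ringKrullDim_quotient_iff (I : Ideal R) (t : ℕ) :
    (t : WithBot ℕ∞) ≤ ringKrullDim (R ⧸ I) ↔
      ∃ l : LTSeries (PrimeSpectrum R), l.length = t ∧ I ≤ l.head.asIdeal := by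
  rw [ringKrullDim_quotient, Order.le_krullDim_iff]
  constructor
  · rintro ⟨l, hl⟩
    exact ⟨l.map Subtype.val (Subtype.strictMono_coe _), hl, l.head.2⟩
  · rintro ⟨l, hl, hle⟩
    exact ⟨⟨l.length, fun i => ⟨l i, hle.trans (l.head_le i)⟩, l.step⟩, hl⟩


theorem annihilator_mul_le_annihilator_sup_span_singleton {U q : Ideal R} {c : R}
    (hc : ∀ b ∈ q, b * c ∈ U) :
    Module.annihilator R U * q ≤
      Module.annihilator R (U ⊔ Ideal.span {c} : Ideal R) := by
  refine Ideal.mul_le.2 fun a ha b hb => Submodule.mem_annihilator.2 fun w hw => ?_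
  rw [← Submodule.annihilator, Submodule.mem_annihilator] at ha
  obtain ⟨v, hv, _, he, rfl⟩ := Submodule.mem_sup.1 hw
  obtain ⟨e, rfl⟩ := Ideal.mem_span_singleton'.1 he
  have hav : a * v = 0 := ha v hv
  have habc : a * (b * c) = 0 := ha _ (hc b hb)
  simp only [smul_eq_mul]
  linear_combination b * hav + e * habc

theorem moduleDim_sup_span_singleton_lt {t : ℕ} {U q : Ideal R} {c : R}
    (hc : ∀ b ∈ q, b * c ∈ U) (hU : moduleDim R U < t) (hq : ringKrullDim (R ⧸ q) < t) :
    moduleDim R (U ⊔ Ideal.span {c} : Ideal R) < t := by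
  by_contra! hle
  obtain ⟨l, hl, hann⟩ := (le_ringKrullDim_quotient_iff _ t).1 hle
  rcases l.head.isPrime.mul_le.1
    ((annihilator_mul_le_annihilator_sup_span_singleton hc).trans hann) with h | h
  · exact hU.not_ge ((le_ringKrullDim_quotient_iff _ t).2 ⟨l, hl, h⟩)
  · exact hq.not_ge ((le_ringKrullDim_quotient_iff _ t).2 ⟨l, hl, h⟩)

theorem IsCatenaryRing.length_eq (hR : IsCatenaryRing R)
    {c₁ c₂ : RelSeries {(P, Q) : PrimeSpectrum R × PrimeSpectrum R | P ⋖ Q}}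
    (hhead : c₁.head = c₂.head) (hlast : c₁.last = c₂.last) : c₁.length = c₂.length :=
  hR c₁.head c₁.last (LTSeries.head_le_last (c₁.ofLE fun _ h => h.lt))
    (c₁.ofLE fun _ h => h.lt) (c₂.ofLE fun _ h => h.lt) rfl rfl hhead.symm hlast.symm
    c₁.step c₂.step

variable [IsNoetherianRing R]

theorem le_ringKrullDim_quotient_of_mem_minimalPrimes {t : ℕ} {U q : Ideal R}
    (hU : moduleDim R U < t) (hUmax : ∀ J : Ideal R, moduleDim R J < t → J ≤ U)
    (hq : q ∈ U.minimalPrimes) : t ≤ ringKrullDim (R ⧸ q) := by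
  obtain ⟨c, hqc⟩ : ∃ c : R, ∀ b, b ∈ q ↔ b * c ∈ U := by
    have hcolon : U.colon {(1 : R)} = U := by
      ext r
      simp [Submodule.mem_colon_singleton]
    rw [← hcolon] at hq
    obtain ⟨c, hc⟩ := Submodule.exists_eq_colon_of_mem_minimalPrimes hq
    exact ⟨c, fun b => by rw [hc, Submodule.mem_colon_singleton, smul_eq_mul]⟩
  by_contra! hlt
  have hle := hUmax _ (moduleDim_sup_span_singleton_lt (fun b => (hqc b).1) hU hlt)
  have hcU : c ∈ U := hle (Ideal.mem_sup_right (Ideal.mem_span_singleton_self c))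
  exact hq.1.1.ne_top ((Ideal.eq_top_iff_one _).2 ((hqc 1).2 (by simpa using hcU)))

variable [IsLocalRing R]

theorem exists_relSeries_covBy_length_eq {t : ℕ} (hdim : ringKrullDim R = t)
    {q : PrimeSpectrum R} (hq : t ≤ ringKrullDim (R ⧸ q.asIdeal)) :
    ∃ c : RelSeries {(P, Q) : PrimeSpectrum R × PrimeSpectrum R | P ⋖ Q},
      c.head = q ∧ c.last = closedPoint R ∧ c.length = t := by
  obtain ⟨l, hl, hql⟩ := (le_ringKrullDim_quotient_iff _ t).1 hq
  obtain ⟨c₁, hhead₁, hlast₁⟩ := exists_relSeries_covBy_of_le (show q ≤ l.head from hql)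
  obtain ⟨c₂, hhead₂, hlast₂, hlength⟩ := exists_relSeries_covBy_length_le l
  obtain ⟨c₃, hhead₃, hlast₃⟩ :=
    exists_relSeries_covBy_of_le (show l.last ≤ closedPoint R from le_top)
  let c := (c₁.smash c₂ (hlast₁.trans hhead₂.symm)).smash c₃ (by simp [hlast₂, hhead₃])
  have hle : c.length ≤ t := by
    have := Order.LTSeries.length_le_krullDim (c.ofLE fun _ h => h.lt)
    rw [← ringKrullDim, hdim] at this
    exact_mod_cast this
  have hge : c.length = c₁.length + c₂.length + c₃.length := rfl
  exact ⟨c, by simp [c, hhead₁], by simp [c, hlast₃], by omega⟩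

theorem IsCatenaryRing.exists_strictMono_le {t : ℕ} (hR : IsCatenaryRing R)
    (hdim : ringKrullDim R = t) {q P : PrimeSpectrum R}
    (hq : t ≤ ringKrullDim (R ⧸ q.asIdeal)) (hqP : q ≤ P) (hP : P ≠ closedPoint R) :
    ∃ p : Fin (t + 1) → PrimeSpectrum R, StrictMono p ∧ p 0 = q ∧ ∃ i < Fin.last t, P = p i := by
  obtain ⟨c, hhead, hlast, rfl⟩ := exists_relSeries_covBy_length_eq hdim hq
  obtain ⟨c₁, hhead₁, hlast₁⟩ := exists_relSeries_covBy_of_le hqP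
  obtain ⟨c₂, hhead₂, hlast₂⟩ :=
    exists_relSeries_covBy_of_le (show P ≤ closedPoint R from le_top)
  let s := c₁.smash c₂ (hlast₁.trans hhead₂.symm)
  have hs : c.length = s.length := hR.length_eq (by simp [s, hhead, hhead₁]) (by simp [s, *])
  rw [hs]
  refine ⟨s, LTSeries.strictMono (s.ofLE fun _ h => h.lt), ?_, ?_⟩
  · exact (RelSeries.head_smash _).trans hhead₁
  · have hpos : c₂.length ≠ 0 := fun h => hP <| by
      rw [← hhead₂, ← hlast₂]
      exact congrArg c₂ (Fin.ext h.symm)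
    refine ⟨(Fin.last c₁.length).castLE (by simp [s]), ?_, ?_⟩
    · rw [Fin.lt_def]
      change c₁.length < c₁.length + c₂.length
      omega
    · exact hlast₁.symm.trans (RelSeries.smash_castLE _ _).symm

end SaturatedChains

/-! ### Reduction modulo the unmixed component -/

section Reduction

variable {R : Type*} [CommRing R] [IsLocalRing R]

theorem comap_mk_maximalIdeal (U : Ideal R) [IsLocalRing (R ⧸ U)] :
    (maximalIdeal (R ⧸ U)).comap (Ideal.Quotient.mk U) = maximalIdeal R :=
  eq_maximalIdeal (Ideal.comap_isMaximal_of_surjective _ Ideal.Quotient.mk_surjective)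

theorem isSOPMod_iff_radical_span_range_mk {U : Ideal R} [IsLocalRing (R ⧸ U)] {t : ℕ}
    {x : Fin t → R} :
    IsSOPMod U x ↔
      (Ideal.span (Set.range (Ideal.Quotient.mk U ∘ x))).radical = maximalIdeal (R ⧸ U) := by
  rw [IsSOPMod, ← comap_mk_maximalIdeal U, Set.range_comp, ← Ideal.map_span,
    ← (Ideal.comap_injective_of_surjective _ Ideal.Quotient.mk_surjective).eq_iff,
    Ideal.comap_radical, Ideal.comap_map_of_surjective _ Ideal.Quotient.mk_surjective,
    ← RingHom.ker_eq_comap_bot, Ideal.mk_ker]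

theorem span_range_mk_le_maximalIdeal_pow {U : Ideal R} [IsLocalRing (R ⧸ U)] {t ℓ : ℕ}
    {x : Fin t → R} (hx : Ideal.span (Set.range x) ≤ maximalIdeal R ^ ℓ) :
    Ideal.span (Set.range (Ideal.Quotient.mk U ∘ x)) ≤ maximalIdeal (R ⧸ U) ^ ℓ := by
  rw [Set.range_comp, ← Ideal.map_span, Ideal.map_le_iff_le_comap]
  refine hx.trans ?_
  rw [← comap_mk_maximalIdeal U]
  exact Ideal.le_comap_pow _ ℓ

theorem moduleDim_top (R : Type*) [CommRing R] : moduleDim R (⊤ : Ideal R) = ringKrullDim R := by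
  rw [moduleDim, (Submodule.topEquiv (R := R) (M := R)).annihilator_eq,
    Module.annihilator_eq_bot.2 inferInstance]
  exact ringKrullDim_eq_of_ringEquiv (RingEquiv.quotientBot R)

theorem IsCatenaryRing.exists_strictMono_quotient_le [IsNoetherianRing R] {t : ℕ}
    (hR : IsCatenaryRing R) (hdim : ringKrullDim R = t) {U : Ideal R} [IsLocalRing (R ⧸ U)]
    (hU : moduleDim R U < t) (hUmax : ∀ J : Ideal R, moduleDim R J < t → J ≤ U)
    {P : PrimeSpectrum (R ⧸ U)} (hP : P.asIdeal ≠ maximalIdeal (R ⧸ U)) :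
    ∃ p : Fin (t + 1) → PrimeSpectrum (R ⧸ U), StrictMono p ∧ ∃ i < Fin.last t, P ≤ p i := by
  let e := Ideal.primeSpectrumQuotientOrderIsoZeroLocus U
  obtain ⟨q, hq, hqP⟩ := Ideal.exists_minimalPrimes_le (show U ≤ (e P).1.asIdeal from (e P).2)
  have hne : (e P).1 ≠ closedPoint R := fun h => hP <|
    Ideal.comap_injective_of_surjective _ Ideal.Quotient.mk_surjective <|
      (congrArg PrimeSpectrum.asIdeal h).trans (comap_mk_maximalIdeal U).symm
  obtain ⟨p, hp, hp_zero, i, hi, hPi⟩ := hR.exists_strictMono_le hdim (q := ⟨q, hq.1.1⟩)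
    (le_ringKrullDim_quotient_of_mem_minimalPrimes hU hUmax hq) hqP hne
  have hUp (j) : p j ∈ PrimeSpectrum.zeroLocus (U : Set R) :=
    hq.1.2.trans (show q ≤ (p j).asIdeal from
      (congrArg PrimeSpectrum.asIdeal hp_zero).ge.trans (hp.monotone (Fin.zero_le j)))
  refine ⟨fun j => e.symm ⟨p j, hUp j⟩, fun j k hjk => e.symm.strictMono (hp hjk), i, hi, ?_⟩
  exact e.le_symm_apply.2 hPi.le

end Reduction

/-- Let `(R, m)` be a catenary Noetherian local ring of dimension `t` with unmixed component
`U = U_R(0)` (the largest ideal of `R` of dimension `< t`).  There is a positive integer `ℓ`,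
depending only on `R`, such that whenever `x = x₁, …, x_t` is a sequence of elements with
`(x) ⊆ m^ℓ` whose image is a system of parameters of `R/U`, and `y = y₁, …, y_t` satisfies
`(y) ⊆^A (x)`, then the image of `y` is a system of parameters of `R/U` if and only if the
determinantal map `det A : R/(x)^lim → R/(y)^lim` is injective (expressed elementwise). -/
theorem exists_bound_sop_mod_unmixed_iff_determinantal_map_injective
    {R : Type*} [CommRing R] [IsNoetherianRing R] [IsLocalRing R]
    {t : ℕ} (hdim : ringKrullDim R = t)
    (hcat : IsCatenaryRing R)
    (U : Ideal R) (hUdim : moduleDim R U < (t : WithBot ℕ∞))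
    (hUmax : ∀ J : Ideal R, moduleDim R J < (t : WithBot ℕ∞) → J ≤ U) :
    ∃ ℓ : ℕ, 0 < ℓ ∧
      ∀ (x y : Fin t → R) (A : Matrix (Fin t) (Fin t) R),
        IsSOPMod U x → Ideal.span (Set.range x) ≤ maximalIdeal R ^ ℓ →
        (∀ i, y i = ∑ j, A i j * x j) →
        (IsSOPMod U y ↔
          ∀ r : R, A.det * r ∈ limitClosure (M := R) y → r ∈ limitClosure (M := R) x) := by
  have hU : U ≠ ⊤ := by
    rintro rfl
    exact hUdim.ne ((moduleDim_top R).trans hdim)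
  have := Ideal.Quotient.nontrivial_iff.2 hU
  have := IsLocalRing.of_surjective' (Ideal.Quotient.mk U) Ideal.Quotient.mk_surjective
  obtain ⟨ℓ, hℓ, h⟩ := exists_bound_radical_eq_maximalIdeal_iff
    ((ringKrullDim_quotient_le U).trans hdim.le)
    fun P hP => hcat.exists_strictMono_quotient_le hdim hUdim hUmax hP
  refine ⟨ℓ, hℓ, fun x y A hx hxℓ hA => ?_⟩
  have hAx : ((Ideal.Quotient.mk U).mapMatrix A).mulVec (Ideal.Quotient.mk U ∘ x) =
      Ideal.Quotient.mk U ∘ y := by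
    ext i
    simp [hA, Matrix.mulVec, dotProduct]
  rw [isSOPMod_iff_radical_span_range_mk, h _ _ _ (isSOPMod_iff_radical_span_range_mk.1 hx)
    (span_range_mk_le_maximalIdeal_pow hxℓ) hAx, Ideal.Quotient.mk_surjective.forall]
  simp only [← RingHom.map_det, smul_eq_mul, ← map_mul,
    mk_mem_limitClosure_iff_of_moduleDim_lt hUdim]
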